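/- arXiv:math/9212207 — 3 statements merged into one kernel-verified Lean document; each statement's English description precedes it below -/
import Mathlib

section
/- Let S, T, X be sets and p : S × T → X a map for which there is m ∈ ℕ with |{s ∈ S : p(s,t₀) = x}| ≤ m and |{t ∈ T : p(s₀,t) = x}| ≤ m for all s₀ ∈ S, t₀ ∈ T, x ∈ X. Let φ : X → ℂ and suppose there is a constant C such that for every ε : X → ℂ with |ε(x)| ≤ 1 for all x ∈ X, the kernel (s,t) ↦ ε(p(s,t))·φ(p(s,t)) is a Schur multiplier of norm at most C. Then there is a constant C′ (depending only on C and m) such that for every ξ : S × T → ℂ with |ξ(s,t)| ≤ 1 for all (s,t), the kernel (s,t) ↦ ξ(s,t)·φ(p(s,t)) is a Schur multiplier of norm at most C′. -/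
open scoped ENNReal NNReal
open MeasureTheory ContinuousLinearMap

noncomputable section

/-- `ψ : S × T → ℂ` is a Schur multiplier of norm at most `C`: for every bounded operator
`A : ℓ²(S) → ℓ²(T)` there is a bounded `B : ℓ²(S) → ℓ²(T)` whose matrix entries are
`ψ(s,t) · A(s,t)` and with `‖B‖ ≤ C‖A‖`. -/
def IsSchurMultiplier {S T : Type*} (ψ : S × T → ℂ) (C : ℝ) : Prop :=
  letI := Classical.decEq S
  letI := Classical.decEq T
  ∀ A : lp (fun _ : S => ℂ) 2 →L[ℂ] lp (fun _ : T => ℂ) 2,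
    ∃ B : lp (fun _ : S => ℂ) 2 →L[ℂ] lp (fun _ : T => ℂ) 2,
      (∀ (s : S) (t : T),
        (inner (𝕜 := ℂ) (lp.single 2 t 1) (B (lp.single 2 s 1)))
          = ψ (s, t) * inner (𝕜 := ℂ) (lp.single 2 t 1) (A (lp.single 2 s 1))) ∧
      ‖B‖ ≤ C * ‖A‖

/-!
Everything reduces to finite matrices. Let the rows and columns of `c` have `ℓ²`-norm at most `q`,
and multiply `c` entrywise by random signs `w (p t s)`. Since `p` takes each value at most `m` times
in every row and column, fourth moments of the signs show that the square of the norm of a row of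
the Gram matrix of the twisted matrix is on average at most `3 m q⁴`. The soft truncation
`x ↦ x / (1 + x² / r²)` of the singular values of the twisted matrix at height `r = √(3 m + 1) q`
therefore has operator norm at most `r / 2` and leaves a remainder which, once untwisted and
averaged over the signs, has rows and columns of norm at most `q / 2`. On the truncated part the
multiplier is controlled by the hypothesis on signs; the remainder is treated in the same way, and
the geometric series gives the bound `C √(3 m + 1) q`.
-/

section SoftTruncation

variable {𝕜 H K : Type*} [RCLike 𝕜]
  [NormedAddCommGroup H] [InnerProductSpace 𝕜 H] [CompleteSpace H]
  [NormedAddCommGroup K] [InnerProductSpace 𝕜 K] [CompleteSpace K]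

/-- The positive operator `r² + F†F`. -/
def shiftedGram (r : ℝ) (F : H →L[𝕜] K) : H →L[𝕜] H :=
  ((r ^ 2 : ℝ) : 𝕜) • 1 + adjoint F ∘L F

lemma shiftedGram_apply (r : ℝ) (F : H →L[𝕜] K) (u : H) :
    shiftedGram r F u = ((r ^ 2 : ℝ) : 𝕜) • u + adjoint F (F u) :=
  rfl

lemma re_inner_shiftedGram_apply (r : ℝ) (F : H →L[𝕜] K) (u : H) :
    RCLike.re (inner 𝕜 (shiftedGram r F u) u) = r ^ 2 * ‖u‖ ^ 2 + ‖F u‖ ^ 2 := by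
  rw [shiftedGram_apply, inner_add_left, inner_smul_left, adjoint_inner_left, RCLike.conj_ofReal,
    map_add, RCLike.re_ofReal_mul, inner_self_eq_norm_sq, inner_self_eq_norm_sq]

lemma isUnit_shiftedGram {r : ℝ} (hr : r ≠ 0) (F : H →L[𝕜] K) : IsUnit (shiftedGram r F) := by
  refine isUnit_of_forall_le_norm_inner_map _ (c := (r ^ 2).toNNReal) (by positivity) fun u => ?_
  calc ‖u‖ ^ 2 * (r ^ 2).toNNReal ≤ r ^ 2 * ‖u‖ ^ 2 + ‖F u‖ ^ 2 := by
        rw [Real.coe_toNNReal _ (sq_nonneg r), mul_comm]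
        exact le_add_of_nonneg_right (sq_nonneg _)
    _ = RCLike.re (inner 𝕜 (shiftedGram r F u) u) := (re_inner_shiftedGram_apply r F u).symm
    _ ≤ _ := RCLike.re_le_norm _

lemma inverse_shiftedGram_apply {r : ℝ} (hr : r ≠ 0) (F : H →L[𝕜] K) (v : H) :
    Ring.inverse (shiftedGram r F) (shiftedGram r F v) = v := by
  rw [← mul_apply_eq_comp, Ring.inverse_mul_cancel _ (isUnit_shiftedGram hr F), one_apply_eq_self]

lemma shiftedGram_inverse_apply {r : ℝ} (hr : r ≠ 0) (F : H →L[𝕜] K) (v : H) :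
    shiftedGram r F (Ring.inverse (shiftedGram r F) v) = v := by
  rw [← mul_apply_eq_comp, Ring.mul_inverse_cancel _ (isUnit_shiftedGram hr F), one_apply_eq_self]

lemma two_mul_norm_apply_le_norm_shiftedGram_apply (r : ℝ) (F : H →L[𝕜] K) (u : H) :
    2 * r * ‖F u‖ ≤ ‖shiftedGram r F u‖ := by
  set x : H := ((r ^ 2 : ℝ) : 𝕜) • u with hx
  set y : H := adjoint F (F u) with hy
  have inner_eq : RCLike.re (inner 𝕜 x y) = r ^ 2 * ‖F u‖ ^ 2 := by
    rw [hx, hy, inner_smul_left, adjoint_inner_right, RCLike.conj_ofReal, RCLike.re_ofReal_mul,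
      inner_self_eq_norm_sq]
  have polarization : ‖x + y‖ ^ 2 - ‖x - y‖ ^ 2 = 4 * RCLike.re (inner 𝕜 x y) := by
    rw [norm_add_sq (𝕜 := 𝕜), norm_sub_sq (𝕜 := 𝕜)]
    ring
  refine le_of_sq_le_sq ?_ (norm_nonneg _)
  rw [shiftedGram_apply]
  nlinarith [sq_nonneg ‖x - y‖]

/-- The soft truncation `r² F (r² + F†F)⁻¹` of `F` at height `r`, which acts on singular values as
`x ↦ x / (1 + x² / r²)`. Unlike a cut-off of the singular values it is algebraic in `F`. -/
def softTruncation (r : ℝ) (F : H →L[𝕜] K) : H →L[𝕜] K :=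
  ((r ^ 2 : ℝ) : 𝕜) • F ∘L Ring.inverse (shiftedGram r F)

lemma norm_apply_inverse_shiftedGram_le {r : ℝ} (hr : 0 < r) (F : H →L[𝕜] K) (v : H) :
    ‖F (Ring.inverse (shiftedGram r F) v)‖ ≤ ‖v‖ / (2 * r) := by
  rw [le_div_iff₀' (by positivity)]
  refine (two_mul_norm_apply_le_norm_shiftedGram_apply r F _).trans_eq ?_
  rw [shiftedGram_inverse_apply hr.ne']

lemma norm_softTruncation_le {r : ℝ} (hr : 0 < r) (F : H →L[𝕜] K) :
    ‖softTruncation r F‖ ≤ r / 2 := by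
  refine opNorm_le_bound _ (by positivity) fun v => ?_
  calc ‖softTruncation r F v‖ = r ^ 2 * ‖F (Ring.inverse (shiftedGram r F) v)‖ := by
        rw [softTruncation, smul_apply, norm_smul, RCLike.norm_ofReal, abs_sq, comp_apply]
    _ ≤ r ^ 2 * (‖v‖ / (2 * r)) := by
        gcongr
        exact norm_apply_inverse_shiftedGram_le hr F v
    _ = r / 2 * ‖v‖ := by field_simp

lemma norm_sub_softTruncation_apply_le {r : ℝ} (hr : 0 < r) (F : H →L[𝕜] K) (v : H) :
    ‖(F - softTruncation r F) v‖ ≤ ‖adjoint F (F v)‖ / (2 * r) := by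
  have cancel := inverse_shiftedGram_apply hr.ne' F v
  have key : (F - softTruncation r F) v
      = F (Ring.inverse (shiftedGram r F) (adjoint F (F v))) := by
    rw [shiftedGram_apply, map_add, map_smul] at cancel
    rw [sub_apply, softTruncation, smul_apply, comp_apply, sub_eq_iff_eq_add', ← map_smul,
      ← map_add, cancel]
  rw [key]
  exact norm_apply_inverse_shiftedGram_le hr F _

lemma isSelfAdjoint_shiftedGram (r : ℝ) (F : H →L[𝕜] K) : IsSelfAdjoint (shiftedGram r F) := by
  rw [isSelfAdjoint_iff']
  refine ContinuousLinearMap.ext fun u => ext_inner_right 𝕜 fun v => ?_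
  simp only [adjoint_inner_left, shiftedGram_apply, inner_add_left, inner_add_right,
    inner_smul_left, inner_smul_right, adjoint_inner_right, RCLike.conj_ofReal]

lemma shiftedGram_adjoint_apply (r : ℝ) (F : H →L[𝕜] K) (u : K) :
    shiftedGram r F (adjoint F u) = adjoint F (shiftedGram r (adjoint F) u) := by
  simp only [shiftedGram_apply, map_add, map_smul, adjoint_adjoint]

lemma adjoint_softTruncation {r : ℝ} (hr : r ≠ 0) (F : H →L[𝕜] K) :
    adjoint (softTruncation r F) = softTruncation r (adjoint F) := by
  have push_through : Ring.inverse (shiftedGram r F) ∘L adjoint F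
      = adjoint F ∘L Ring.inverse (shiftedGram r (adjoint F)) := by
    ext u
    obtain ⟨v, rfl⟩ : ∃ v, shiftedGram r (adjoint F) v = u :=
      ⟨_, shiftedGram_inverse_apply hr _ u⟩
    rw [comp_apply, comp_apply, ← shiftedGram_adjoint_apply, inverse_shiftedGram_apply hr,
      inverse_shiftedGram_apply hr]
  rw [softTruncation, softTruncation, map_smulₛₗ, RCLike.conj_ofReal, adjoint_comp,
    (isSelfAdjoint_shiftedGram r F).ringInverse.adjoint_eq, push_through]

end SoftTruncation

open scoped Matrix Matrix.Norms.L2Operator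

section MatrixTruncation

variable {S T : Type*} [Fintype S] [Fintype T] [DecidableEq S]

/-- The operator `ℓ²(S) → ℓ²(T)` with matrix `A`; rows are indexed by the target. -/
def matrixOperator : Matrix T S ℂ ≃ₗ[ℂ] (EuclideanSpace ℂ S →L[ℂ] EuclideanSpace ℂ T) :=
  Matrix.toEuclideanLin.trans LinearMap.toContinuousLinearMap

lemma norm_matrixOperator (A : Matrix T S ℂ) : ‖matrixOperator A‖ = ‖A‖ :=
  (Matrix.l2_opNorm_def A).symm

lemma matrixOperator_apply (A : Matrix T S ℂ) (v : EuclideanSpace ℂ S) :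
    matrixOperator A v = WithLp.toLp 2 (A *ᵥ v) :=
  rfl

lemma adjoint_matrixOperator [DecidableEq T] (A : Matrix T S ℂ) :
    adjoint (matrixOperator A) = matrixOperator Aᴴ := by
  refine ContinuousLinearMap.ext fun u => ext_inner_right ℂ fun v => ?_
  rw [adjoint_inner_left]
  simp [matrixOperator, Matrix.toEuclideanLin_conjTranspose_eq_adjoint,
    LinearMap.adjoint_inner_left]

lemma norm_matrixOperator_single_sq (A : Matrix T S ℂ) (s : S) :
    ‖matrixOperator A (EuclideanSpace.single s 1)‖ ^ 2 = ∑ t, ‖A t s‖ ^ 2 := by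
  simp [EuclideanSpace.norm_sq_eq, matrixOperator_apply]

/-- `softTruncation` for matrices. -/
def matrixSoftTruncation (r : ℝ) (A : Matrix T S ℂ) : Matrix T S ℂ :=
  matrixOperator.symm (softTruncation r (matrixOperator A))

lemma norm_matrixSoftTruncation_le {r : ℝ} (hr : 0 < r) (A : Matrix T S ℂ) :
    ‖matrixSoftTruncation r A‖ ≤ r / 2 := by
  rw [← norm_matrixOperator, matrixSoftTruncation, LinearEquiv.apply_symm_apply]
  exact norm_softTruncation_le hr _

lemma conjTranspose_matrixSoftTruncation [DecidableEq T] {r : ℝ} (hr : r ≠ 0)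
    (A : Matrix T S ℂ) : (matrixSoftTruncation r A)ᴴ = matrixSoftTruncation r Aᴴ := by
  apply matrixOperator.injective
  rw [← adjoint_matrixOperator, matrixSoftTruncation, matrixSoftTruncation,
    LinearEquiv.apply_symm_apply, LinearEquiv.apply_symm_apply, adjoint_softTruncation hr,
    adjoint_matrixOperator]

lemma sum_col_sub_matrixSoftTruncation_le {r : ℝ} (hr : 0 < r) (A : Matrix T S ℂ) (s : S) :
    ∑ t, ‖(A - matrixSoftTruncation r A) t s‖ ^ 2
      ≤ (∑ s', ‖(Aᴴ * A) s' s‖ ^ 2) / (2 * r) ^ 2 := by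
  classical
  have gram : adjoint (matrixOperator A) (matrixOperator A (EuclideanSpace.single s 1))
      = matrixOperator (Aᴴ * A) (EuclideanSpace.single s 1) := by
    rw [adjoint_matrixOperator]
    simp only [matrixOperator_apply, Matrix.mulVec_mulVec]
  calc ∑ t, ‖(A - matrixSoftTruncation r A) t s‖ ^ 2
      = ‖(matrixOperator A - softTruncation r (matrixOperator A))
          (EuclideanSpace.single s 1)‖ ^ 2 := by
        rw [← norm_matrixOperator_single_sq, map_sub, matrixSoftTruncation,
          LinearEquiv.apply_symm_apply]
    _ ≤ (‖matrixOperator (Aᴴ * A) (EuclideanSpace.single s 1)‖ / (2 * r)) ^ 2 := by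
        rw [← gram]
        gcongr
        exact norm_sub_softTruncation_apply_le hr _ _
    _ = (∑ s', ‖(Aᴴ * A) s' s‖ ^ 2) / (2 * r) ^ 2 := by
        rw [div_pow, norm_matrixOperator_single_sq]

lemma sum_row_sub_matrixSoftTruncation_le {r : ℝ} (hr : 0 < r) (A : Matrix T S ℂ) (t : T) :
    ∑ s, ‖(A - matrixSoftTruncation r A) t s‖ ^ 2
      ≤ (∑ t', ‖(A * Aᴴ) t' t‖ ^ 2) / (2 * r) ^ 2 := by
  classical
  have := sum_col_sub_matrixSoftTruncation_le hr Aᴴ t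
  rw [← conjTranspose_matrixSoftTruncation hr.ne', ← Matrix.conjTranspose_sub] at this
  simpa only [Matrix.conjTranspose_apply, norm_star, Matrix.conjTranspose_conjTranspose] using this

end MatrixTruncation

section RowColBounded

variable {S T : Type*} [Fintype S] [Fintype T]

/-- The ball of radius `q` in `ℓ∞(S; ℓ²(T)) ∩ ℓ∞(T; ℓ²(S))`: the rows and the columns of `c` have
`ℓ²`-norm at most `q`. -/
structure RowColBounded (c : Matrix T S ℂ) (q : ℝ) : Prop where
  sum_row_le : ∀ t, ∑ s, ‖c t s‖ ^ 2 ≤ q ^ 2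
  sum_col_le : ∀ s, ∑ t, ‖c t s‖ ^ 2 ≤ q ^ 2

namespace RowColBounded

lemma of_norm_le {c d : Matrix T S ℂ} {q : ℝ} (hd : RowColBounded d q)
    (h : ∀ t s, ‖c t s‖ ≤ ‖d t s‖) : RowColBounded c q where
  sum_row_le t := (Finset.sum_le_sum fun s _ => by gcongr; exact h t s).trans (hd.sum_row_le t)
  sum_col_le s := (Finset.sum_le_sum fun t _ => by gcongr; exact h t s).trans (hd.sum_col_le s)

lemma conjTranspose {c : Matrix T S ℂ} {q : ℝ} (hc : RowColBounded c q) : RowColBounded cᴴ q where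
  sum_row_le s := by simpa only [Matrix.conjTranspose_apply, norm_star] using hc.sum_col_le s
  sum_col_le t := by simpa only [Matrix.conjTranspose_apply, norm_star] using hc.sum_row_le t

end RowColBounded

lemma sum_col_le_l2_opNorm_sq [DecidableEq S] (D : Matrix T S ℂ) (s : S) :
    ∑ t, ‖D t s‖ ^ 2 ≤ ‖D‖ ^ 2 := by
  rw [← norm_matrixOperator_single_sq, ← norm_matrixOperator]
  gcongr
  exact (le_opNorm _ _).trans_eq (by simp)

lemma rowColBounded_l2_opNorm [DecidableEq S] (D : Matrix T S ℂ) : RowColBounded D ‖D‖ where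
  sum_row_le t := by
    classical
    simpa only [Matrix.conjTranspose_apply, norm_star, Matrix.l2_opNorm_conjTranspose]
      using sum_col_le_l2_opNorm_sq Dᴴ t
  sum_col_le := sum_col_le_l2_opNorm_sq D

end RowColBounded

open scoped BigOperators
open Finset (card expect)

section RandomSigns

variable {X : Type*} [Fintype X] [DecidableEq X]

lemma expect_monoidHom_eq_zero {G : Type*} [Group G] [Fintype G] {χ : G →* ℝ} {g : G}
    (hg : χ g ≠ 1) : 𝔼 h, χ h = 0 := by
  rw [Fintype.expect_eq_sum_div_card, sum_hom_units_eq_zero χ (by rintro rfl; simp at hg), zero_div]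

/-- The character `w ↦ w a * w b * (w c * w d)` of the sign group `X → {±1}`. -/
def fourSigns (a b c d : X) : (X → ℤˣ) →* ℤˣ :=
  let ev := Pi.evalMonoidHom fun _ : X => ℤˣ
  ev a * ev b * (ev c * ev d)

omit [Fintype X] [DecidableEq X] in
lemma exists_fourSigns_eq_neg_one {a b c d : X}
    (h : ¬((a = b ∧ c = d) ∨ s(a, b) = s(c, d))) : ∃ w, fourSigns a b c d w = -1 := by
  classical
  rw [Sym2.eq_iff] at h
  have occurs_alone : (a ≠ b ∧ a ≠ c ∧ a ≠ d) ∨ (b ≠ a ∧ b ≠ c ∧ b ≠ d) ∨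
      (c ≠ a ∧ c ≠ b ∧ c ≠ d) ∨ (d ≠ a ∧ d ≠ b ∧ d ≠ c) := by grind
  suffices ∃ x, fourSigns a b c d (Pi.mulSingle x (-1)) = -1 from this.imp' _ fun _ => id
  simp only [fourSigns, MonoidHom.mul_apply, Pi.evalMonoidHom_apply, Pi.mulSingle_apply]
  rcases occurs_alone with h | h | h | h
  exacts [⟨a, by simp [h.1.symm, h.2.1.symm, h.2.2.symm]⟩,
    ⟨b, by simp [h.1.symm, h.2.1.symm, h.2.2.symm]⟩,
    ⟨c, by simp [h.1.symm, h.2.1.symm, h.2.2.symm]⟩,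
    ⟨d, by simp [h.1.symm, h.2.1.symm, h.2.2.symm]⟩]

lemma abs_expect_fourSigns_le (a b c d : X) :
    |𝔼 w, ((fourSigns a b c d w : ℤ) : ℝ)|
      ≤ if (a = b ∧ c = d) ∨ s(a, b) = s(c, d) then 1 else 0 := by
  split_ifs with h
  · refine (Finset.abs_expect_le _ _).trans
      (Finset.expect_le Finset.univ_nonempty fun w _ => ?_)
    rw [← Int.cast_abs, Int.isUnit_iff_abs_eq.1 (Units.isUnit _), Int.cast_one]
  · obtain ⟨w, hw⟩ := exists_fourSigns_eq_neg_one h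
    refine (abs_eq_zero.2 ?_).le
    exact expect_monoidHom_eq_zero (g := w)
      (χ := (Int.castRingHom ℝ : ℤ →* ℝ).comp ((Units.coeHom ℤ).comp (fourSigns a b c d)))
      (by norm_num [hw])

omit [Fintype X] [DecidableEq X] in
lemma inner_units_smul_smul {E : Type*} [NormedAddCommGroup E] [InnerProductSpace ℝ E]
    (ε δ : ℤˣ) (u v : E) : inner ℝ (ε • u) (δ • v) = ((ε * δ : ℤˣ) : ℤ) * inner ℝ u v := by
  rw [Units.smul_def, Units.smul_def, ← Int.cast_smul_eq_zsmul ℝ, ← Int.cast_smul_eq_zsmul ℝ,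
    real_inner_smul_left, real_inner_smul_right, Units.val_mul, Int.cast_mul, mul_assoc]

lemma sum_sum_filter_mul_le {ι : Type*} [Fintype ι] {R : ι → ι → Prop} [DecidableRel R]
    (hR : ∀ i j, R i j → R j i) {k : ℕ} (hdeg : ∀ i, card {j | R i j} ≤ k) (x : ι → ℝ) :
    ∑ i, ∑ j with R i j, x i * x j ≤ k * ∑ i, x i ^ 2 := by
  have symm_sum : ∑ i, ∑ j with R i j, x j ^ 2 = ∑ i, ∑ j with R i j, x i ^ 2 :=
    Finset.sum_comm' fun i j => by simpa using ⟨hR i j, hR j i⟩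
  calc ∑ i, ∑ j with R i j, x i * x j
      ≤ ∑ i, ∑ j with R i j, (x i ^ 2 + x j ^ 2) / 2 := by
        gcongr with i _ j _
        linarith [two_mul_le_add_sq (x i) (x j)]
    _ = ∑ i, (card {j | R i j} : ℝ) * x i ^ 2 := by
        simp only [← Finset.sum_div, Finset.sum_add_distrib, symm_sum, add_self_div_two,
          Finset.sum_const, nsmul_eq_mul]
    _ ≤ ∑ i, (k : ℝ) * x i ^ 2 := by
        gcongr with i _
        exact hdeg i
    _ = k * ∑ i, x i ^ 2 := (Finset.mul_sum ..).symm

lemma expect_norm_sum_smul_sq_le {ι E : Type*} [Fintype ι] [NormedAddCommGroup E]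
    [InnerProductSpace ℝ E] {a b : ι → X} {k : ℕ}
    (hdeg : ∀ i, card {j | s(a i, b i) = s(a j, b j)} ≤ k) (u : ι → E) :
    𝔼 w : X → ℤˣ, ‖∑ i, (w (a i) * w (b i)) • u i‖ ^ 2
      ≤ (∑ i with a i = b i, ‖u i‖) ^ 2 + k * ∑ i, ‖u i‖ ^ 2 := by
  have expand (w : X → ℤˣ) : ‖∑ i, (w (a i) * w (b i)) • u i‖ ^ 2
      = ∑ i, ∑ j, ((fourSigns (a i) (b i) (a j) (b j) w : ℤ) : ℝ) * inner ℝ (u i) (u j) := by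
    rw [← real_inner_self_eq_norm_sq, sum_inner]
    simp only [inner_sum, inner_units_smul_smul]
    rfl
  have moment (i j : ι) :
      𝔼 w, ((fourSigns (a i) (b i) (a j) (b j) w : ℤ) : ℝ) * inner ℝ (u i) (u j)
        ≤ (if a i = b i ∧ a j = b j then ‖u i‖ * ‖u j‖ else 0)
          + if s(a i, b i) = s(a j, b j) then ‖u i‖ * ‖u j‖ else 0 := by
    rw [← Finset.expect_mul]
    refine (le_abs_self _).trans ?_
    rw [abs_mul]
    refine (mul_le_mul (abs_expect_fourSigns_le ..) (abs_real_inner_le_norm _ _) (abs_nonneg _)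
      (by positivity)).trans ?_
    have := mul_nonneg (norm_nonneg (u i)) (norm_nonneg (u j))
    split_ifs <;> grind
  calc 𝔼 w : X → ℤˣ, ‖∑ i, (w (a i) * w (b i)) • u i‖ ^ 2
      = ∑ i, ∑ j,
          𝔼 w, ((fourSigns (a i) (b i) (a j) (b j) w : ℤ) : ℝ) * inner ℝ (u i) (u j) := by
        simp only [expand, Finset.expect_sum_comm]
    _ ≤ ∑ i, ∑ j, ((if a i = b i ∧ a j = b j then ‖u i‖ * ‖u j‖ else 0)
          + if s(a i, b i) = s(a j, b j) then ‖u i‖ * ‖u j‖ else 0) := by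
        gcongr with i _ j _
        exact moment i j
    _ = (∑ i with a i = b i, ‖u i‖) ^ 2
          + ∑ i, ∑ j with s(a i, b i) = s(a j, b j), ‖u i‖ * ‖u j‖ := by
        simp only [Finset.sum_add_distrib, sq, Finset.sum_mul_sum, Finset.sum_filter,
          ite_zero_mul_ite_zero]
    _ ≤ (∑ i with a i = b i, ‖u i‖) ^ 2 + k * ∑ i, ‖u i‖ ^ 2 := by
        gcongr
        exact sum_sum_filter_mul_le (fun _ _ => Eq.symm) hdeg _

end RandomSigns

lemma card_filter_le_of_encard_le {ι : Type*} [Fintype ι] {P : ι → Prop} [DecidablePred P] {m : ℕ}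
    (h : {i | P i}.encard ≤ m) : card {i | P i} ≤ m := by
  rwa [← Nat.cast_le (α := ℕ∞), ← Set.encard_coe_eq_coe_finsetCard, Finset.coe_filter_univ]

/-- Every row and every column of `p` takes each value at most `m` times. -/
structure HasBoundedFibers {S T X : Type*} (p : T → S → X) (m : ℕ) : Prop where
  encard_row_le : ∀ t x, {s | p t s = x}.encard ≤ m
  encard_col_le : ∀ s x, {t | p t s = x}.encard ≤ m

namespace HasBoundedFibers

variable {S T X : Type*} {p : T → S → X} {m : ℕ}

lemma swap (hp : HasBoundedFibers p m) : HasBoundedFibers (Function.swap p) m :=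
  ⟨hp.encard_col_le, hp.encard_row_le⟩

lemma comp_injective {S' T' : Type*} (hp : HasBoundedFibers p m) {f : T' → T} {g : S' → S}
    (hf : f.Injective) (hg : g.Injective) : HasBoundedFibers (fun t s => p (f t) (g s)) m where
  encard_row_le t x := (hg.encard_image _).symm.trans_le
    ((Set.encard_le_encard (Set.image_preimage_subset g {s | p (f t) s = x})).trans
      (hp.encard_row_le (f t) x))
  encard_col_le s x := (hf.encard_image _).symm.trans_le
    ((Set.encard_le_encard (Set.image_preimage_subset f {t | p t (g s) = x})).trans
      (hp.encard_col_le (g s) x))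

lemma of_comp_injective {Y : Type*} {i : X → Y} (hi : i.Injective)
    (hp : HasBoundedFibers (fun t s => i (p t s)) m) : HasBoundedFibers p m where
  encard_row_le t x := by simpa only [hi.eq_iff] using hp.encard_row_le t (i x)
  encard_col_le s x := by simpa only [hi.eq_iff] using hp.encard_col_le s (i x)

lemma card_row_le [Fintype S] [DecidableEq X] (hp : HasBoundedFibers p m) (t : T) (x : X) :
    card {s | p t s = x} ≤ m :=
  card_filter_le_of_encard_le (hp.encard_row_le t x)

lemma card_col_le [Fintype T] [DecidableEq X] (hp : HasBoundedFibers p m) (s : S) (x : X) :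
    card {t | p t s = x} ≤ m :=
  hp.swap.card_row_le s x

lemma card_sym2_row_eq_le [Fintype S] [DecidableEq X] (hp : HasBoundedFibers p m) (t t' : T)
    (s : S) : card {s' | s(p t s, p t' s) = s(p t s', p t' s')} ≤ 2 * m := by
  classical
  calc card {s' | s(p t s, p t' s) = s(p t s', p t' s')}
      ≤ card {s' | p t s' = p t s ∨ p t s' = p t' s} := by
        refine Finset.card_le_card fun s' => ?_
        simp only [Finset.mem_filter_univ, Sym2.eq_iff]
        exact Or.imp (·.1.symm) (·.2.symm)
    _ ≤ m + m := by
        rw [Finset.filter_or]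
        exact (Finset.card_union_le _ _).trans
          (add_le_add (hp.card_row_le t _) (hp.card_row_le t _))
    _ = 2 * m := (two_mul m).symm

end HasBoundedFibers

section SignTwist

variable {S T X : Type*}

/-- The matrix `c` with its `(t, s)` entry multiplied by the sign `w (p t s)`. -/
def signTwist (w : X → ℤˣ) (p : T → S → X) (c : Matrix T S ℂ) : Matrix T S ℂ :=
  Matrix.of fun t s => w (p t s) • c t s

@[simp]
lemma signTwist_apply (w : X → ℤˣ) (p : T → S → X) (c : Matrix T S ℂ) (t : T) (s : S) :
    signTwist w p c t s = w (p t s) • c t s :=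
  rfl

lemma conjTranspose_signTwist (w : X → ℤˣ) (p : T → S → X) (c : Matrix T S ℂ) :
    (signTwist w p c)ᴴ = signTwist w (Function.swap p) cᴴ := by
  ext s t
  simp [Units.smul_def, Function.swap]

variable [Fintype S]

lemma signTwist_mul_conjTranspose_apply (w : X → ℤˣ) (p : T → S → X) (c : Matrix T S ℂ)
    (t' t : T) : (signTwist w p c * (signTwist w p c)ᴴ) t' t
      = ∑ s, (w (p t' s) * w (p t s)) • (c t' s * star (c t s)) := by
  simp only [Matrix.mul_apply, Matrix.conjTranspose_apply, signTwist_apply]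
  refine Finset.sum_congr rfl fun s _ => ?_
  simp [Units.smul_def, mul_mul_mul_comm]

variable [Fintype T] {p : T → S → X} {m : ℕ} {c : Matrix T S ℂ} {q : ℝ}

lemma sum_sq_sum_filter_norm_mul_le [DecidableEq X] (hp : HasBoundedFibers p m)
    (hc : RowColBounded c q) (t : T) :
    ∑ t', (∑ s with p t' s = p t s, ‖c t' s * star (c t s)‖) ^ 2 ≤ m * q ^ 4 := by
  have cauchy_schwarz (t' : T) : (∑ s with p t' s = p t s, ‖c t' s * star (c t s)‖) ^ 2
      ≤ q ^ 2 * ∑ s with p t' s = p t s, ‖c t s‖ ^ 2 := by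
    simp only [norm_mul, norm_star]
    refine (Finset.sum_mul_sq_le_sq_mul_sq _ _ _).trans ?_
    gcongr
    exact (Finset.sum_le_univ_sum_of_nonneg fun s => sq_nonneg _).trans (hc.sum_row_le t')
  calc ∑ t', (∑ s with p t' s = p t s, ‖c t' s * star (c t s)‖) ^ 2
      ≤ ∑ t', q ^ 2 * ∑ s with p t' s = p t s, ‖c t s‖ ^ 2 :=
        Finset.sum_le_sum fun t' _ => cauchy_schwarz t'
    _ = q ^ 2 * ∑ s, (card {t' | p t' s = p t s} : ℝ) * ‖c t s‖ ^ 2 := by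
        rw [← Finset.mul_sum, Finset.sum_comm' (t' := Finset.univ)
          (s' := fun s => {t' | p t' s = p t s}) (by simp)]
        simp only [Finset.sum_const, nsmul_eq_mul]
    _ ≤ q ^ 2 * ∑ s, (m : ℝ) * ‖c t s‖ ^ 2 := by
        gcongr with s
        exact hp.card_col_le s _
    _ ≤ q ^ 2 * (m * q ^ 2) := by
        rw [← Finset.mul_sum]
        gcongr
        exact hc.sum_row_le t
    _ = m * q ^ 4 := by ring

lemma sum_sum_norm_mul_sq_le (hc : RowColBounded c q) (t : T) :
    ∑ t', ∑ s, ‖c t' s * star (c t s)‖ ^ 2 ≤ q ^ 4 := by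
  calc ∑ t', ∑ s, ‖c t' s * star (c t s)‖ ^ 2
      = ∑ s, (∑ t', ‖c t' s‖ ^ 2) * ‖c t s‖ ^ 2 := by
        rw [Finset.sum_comm]
        simp only [norm_mul, norm_star, mul_pow, Finset.sum_mul]
    _ ≤ ∑ s, q ^ 2 * ‖c t s‖ ^ 2 := by
        gcongr with s
        exact hc.sum_col_le s
    _ ≤ q ^ 2 * q ^ 2 := by
        rw [← Finset.mul_sum]
        gcongr
        exact hc.sum_row_le t
    _ = q ^ 4 := by ring

lemma expect_sum_norm_gram_signTwist_sq_le [Fintype X] [DecidableEq X]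
    (hp : HasBoundedFibers p m) (hc : RowColBounded c q) (t : T) :
    𝔼 w : X → ℤˣ, ∑ t', ‖(signTwist w p c * (signTwist w p c)ᴴ) t' t‖ ^ 2
      ≤ 3 * m * q ^ 4 := by
  calc 𝔼 w : X → ℤˣ, ∑ t', ‖(signTwist w p c * (signTwist w p c)ᴴ) t' t‖ ^ 2
      = ∑ t', 𝔼 w : X → ℤˣ,
          ‖∑ s, (w (p t' s) * w (p t s)) • (c t' s * star (c t s))‖ ^ 2 := by
        simp only [signTwist_mul_conjTranspose_apply, Finset.expect_sum_comm]
    _ ≤ ∑ t', ((∑ s with p t' s = p t s, ‖c t' s * star (c t s)‖) ^ 2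
          + (2 * m : ℕ) * ∑ s, ‖c t' s * star (c t s)‖ ^ 2) := by
        gcongr with t' _
        exact expect_norm_sum_smul_sq_le (fun s => hp.card_sym2_row_eq_le t' t s) _
    _ ≤ m * q ^ 4 + (2 * m : ℕ) * q ^ 4 := by
        rw [Finset.sum_add_distrib, ← Finset.mul_sum]
        gcongr
        · exact sum_sq_sum_filter_norm_mul_le hp hc t
        · exact sum_sum_norm_mul_sq_le hc t
    _ = 3 * m * q ^ 4 := by push_cast; ring

end SignTwist

section Averaging

variable {S T X : Type*} [Fintype S] [Fintype T] [Fintype X] [DecidableEq X]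

lemma norm_expect_le_expect_norm {ι E : Type*} [Fintype ι] [NormedAddCommGroup E]
    [NormedSpace ℝ E] [Module ℚ≥0 E] (f : ι → E) : ‖𝔼 i, f i‖ ≤ 𝔼 i, ‖f i‖ :=
  Finset.le_expect_of_subadditive norm_zero norm_add_le fun a x => by
    rw [← NNRat.cast_smul_eq_nnqsmul ℝ, norm_smul, NNRat.smul_def, RCLike.norm_nnratCast]

lemma norm_expect_sq_le {ι E : Type*} [Fintype ι] [Nonempty ι] [NormedAddCommGroup E]
    [NormedSpace ℝ E] [Module ℚ≥0 E] (f : ι → E) : ‖𝔼 i, f i‖ ^ 2 ≤ 𝔼 i, ‖f i‖ ^ 2 := by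
  calc ‖𝔼 i, f i‖ ^ 2 ≤ (𝔼 i, ‖f i‖ * 1) ^ 2 := by
        simp only [mul_one]
        gcongr
        exact norm_expect_le_expect_norm f
    _ ≤ (𝔼 i, ‖f i‖ ^ 2) * 𝔼 _i : ι, (1 : ℝ) ^ 2 := Finset.expect_mul_sq_le_sq_mul_sq ..
    _ = 𝔼 i, ‖f i‖ ^ 2 := by rw [Fintype.expect_const, one_pow, mul_one]

lemma matrix_expect_apply {S T ι : Type*} [Fintype ι] (A : ι → Matrix T S ℂ) (t : T) (s : S) :
    (𝔼 i, A i) t s = 𝔼 i, A i t s :=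
  map_expect (Matrix.entryLinearMap ℚ≥0 ℂ t s) A _

section Averaging

variable {S T X : Type*} [Fintype S] [Fintype T] [Fintype X] [DecidableEq X]

variable [DecidableEq S]

/-- The part of `c` that survives when, for every sign function `w`, the soft truncation of
`signTwist w p c` at height `r` is removed, the twist is undone, and `w` is averaged out. -/
def averagedRemainder (r : ℝ) (p : T → S → X) (c : Matrix T S ℂ) : Matrix T S ℂ :=
  𝔼 w : X → ℤˣ, signTwist w p (signTwist w p c - matrixSoftTruncation r (signTwist w p c))

lemma averagedRemainder_apply (r : ℝ) (p : T → S → X) (c : Matrix T S ℂ) (t : T) (s : S) :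
    averagedRemainder r p c t s = 𝔼 w : X → ℤˣ,
      w (p t s) • (signTwist w p c - matrixSoftTruncation r (signTwist w p c)) t s :=
  matrix_expect_apply ..

lemma conjTranspose_averagedRemainder [DecidableEq T] {r : ℝ} (hr : r ≠ 0) (p : T → S → X)
    (c : Matrix T S ℂ) :
    (averagedRemainder r p c)ᴴ = averagedRemainder r (Function.swap p) cᴴ := by
  rw [averagedRemainder, averagedRemainder]
  refine (map_expect (Matrix.conjTransposeLinearEquiv T S ℚ≥0 ℂ) _ _).trans ?_
  refine Finset.expect_congr rfl fun w _ => ?_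
  change (signTwist w p _)ᴴ = _
  rw [conjTranspose_signTwist, Matrix.conjTranspose_sub, conjTranspose_matrixSoftTruncation hr,
    conjTranspose_signTwist]

variable {p : T → S → X} {m : ℕ} {c : Matrix T S ℂ} {q r : ℝ}

lemma sum_row_averagedRemainder_le (hp : HasBoundedFibers p m) (hc : RowColBounded c q)
    (hr : 0 < r) (hqr : 3 * m * q ^ 2 ≤ r ^ 2) (t : T) :
    ∑ s, ‖averagedRemainder r p c t s‖ ^ 2 ≤ (q / 2) ^ 2 := by
  classical
  calc ∑ s, ‖averagedRemainder r p c t s‖ ^ 2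
      ≤ ∑ s, 𝔼 w : X → ℤˣ,
          ‖(signTwist w p c - matrixSoftTruncation r (signTwist w p c)) t s‖ ^ 2 := by
        gcongr with s _
        rw [averagedRemainder_apply]
        exact (norm_expect_sq_le _).trans_eq (by simp only [norm_units_zsmul])
    _ ≤ 𝔼 w : X → ℤˣ,
          (∑ t', ‖(signTwist w p c * (signTwist w p c)ᴴ) t' t‖ ^ 2) / (2 * r) ^ 2 := by
        rw [← Finset.expect_sum_comm]
        gcongr with w _
        exact sum_row_sub_matrixSoftTruncation_le hr _ t
    _ ≤ 3 * m * q ^ 4 / (2 * r) ^ 2 := by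
        rw [← Finset.expect_div]
        gcongr
        exact expect_sum_norm_gram_signTwist_sq_le hp hc t
    _ ≤ (q / 2) ^ 2 := by
        rw [div_le_iff₀ (by positivity)]
        nlinarith [mul_le_mul_of_nonneg_right hqr (sq_nonneg q)]

lemma rowColBounded_averagedRemainder (hp : HasBoundedFibers p m) (hc : RowColBounded c q)
    (hr : 0 < r) (hqr : 3 * m * q ^ 2 ≤ r ^ 2) :
    RowColBounded (averagedRemainder r p c) (q / 2) where
  sum_row_le := sum_row_averagedRemainder_le hp hc hr hqr
  sum_col_le s := by
    classical
    have := sum_row_averagedRemainder_le hp.swap hc.conjTranspose hr hqr s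
    rw [← conjTranspose_averagedRemainder hr.ne'] at this
    simpa only [Matrix.conjTranspose_apply, norm_star] using this

lemma hadamard_eq_expect_signTwist_add (r : ℝ) (p : T → S → X) (Ψ c : Matrix T S ℂ) :
    Ψ ⊙ c = (𝔼 w : X → ℤˣ, signTwist w p (Ψ ⊙ matrixSoftTruncation r (signTwist w p c)))
      + Ψ ⊙ averagedRemainder r p c := by
  ext t s
  simp only [Matrix.add_apply, Matrix.hadamard_apply, matrix_expect_apply, averagedRemainder_apply,
    signTwist_apply]
  rw [Finset.mul_expect, ← Finset.expect_add_distrib]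
  refine (Fintype.expect_const _).symm.trans (Finset.expect_congr rfl fun w _ => ?_)
  rw [Matrix.sub_apply, smul_sub, mul_sub, signTwist_apply, smul_smul, Int.units_mul_self, one_smul,
    mul_smul_comm, add_sub_cancel]

lemma norm_hadamard_le_add_averagedRemainder {Ψ : Matrix T S ℂ} {C : ℝ} (hC : 0 ≤ C)
    (hΨ : ∀ (w : X → ℤˣ) (D : Matrix T S ℂ), ‖signTwist w p (Ψ ⊙ D)‖ ≤ C * ‖D‖) (hr : 0 < r)
    (c : Matrix T S ℂ) : ‖Ψ ⊙ c‖ ≤ C * (r / 2) + ‖Ψ ⊙ averagedRemainder r p c‖ := by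
  conv_lhs => rw [hadamard_eq_expect_signTwist_add r p Ψ c]
  refine (norm_add_le _ _).trans (add_le_add_left ?_ _)
  refine (norm_expect_le_expect_norm _).trans (Finset.expect_le Finset.univ_nonempty fun w _ => ?_)
  refine (hΨ w _).trans ?_
  gcongr
  exact norm_matrixSoftTruncation_le hr _

end Averaging

lemma le_mul_of_halving {α : Type*} {P : α → ℝ → Prop} {f : α → ℝ} {K M : ℝ}
    (crude : ∀ c q, 0 < q → P c q → f c ≤ M * q)
    (halve : ∀ c q, 0 < q → P c q → ∃ c', P c' (q / 2) ∧ f c ≤ K / 2 * q + f c')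
    {c : α} {q : ℝ} (hq : 0 < q) (hc : P c q) : f c ≤ K * q := by
  have iterate (n : ℕ) : ∀ c q, 0 < q → P c q → f c ≤ (K + (M - K) * (1 / 2) ^ n) * q := by
    induction n with
    | zero => simpa using crude
    | succ n ih =>
      intro c q hq hc
      obtain ⟨c', hc', hcc'⟩ := halve c q hq hc
      linear_combination hcc' + ih c' (q / 2) (half_pos hq) hc'
  have limit : Filter.Tendsto (fun n : ℕ => (K + (M - K) * (1 / 2) ^ n) * q) Filter.atTop
      (nhds ((K + (M - K) * 0) * q)) :=
    (((tendsto_pow_atTop_nhds_zero_of_lt_one (by norm_num) (by norm_num)).const_mul _).const_add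
      _).mul_const _
  simpa using ge_of_tendsto' limit fun n => iterate n c q hq hc

section FiniteMultiplier

variable {S T X : Type*} [Fintype S] [Fintype T]

lemma RowColBounded.norm_apply_le {c : Matrix T S ℂ} {q : ℝ} (hc : RowColBounded c q)
    (hq : 0 ≤ q) (t : T) (s : S) : ‖c t s‖ ≤ q := by
  refine le_of_sq_le_sq (le_trans ?_ (hc.sum_row_le t)) hq
  exact Finset.single_le_sum (f := fun s => ‖c t s‖ ^ 2) (fun _ _ => sq_nonneg _)
    (Finset.mem_univ s)

lemma RowColBounded.norm_hadamard_le [DecidableEq S] [DecidableEq T] {c : Matrix T S ℂ} {q : ℝ}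
    (hc : RowColBounded c q) (hq : 0 ≤ q) (Ψ : Matrix T S ℂ) :
    ‖Ψ ⊙ c‖ ≤ (∑ t, ∑ s, ‖Matrix.single t s (Ψ t s)‖) * q := by
  rw [Matrix.matrix_eq_sum_single (Ψ ⊙ c)]
  simp only [Finset.sum_mul]
  refine norm_sum_le_of_le _ fun t _ => norm_sum_le_of_le _ fun s _ => ?_
  calc ‖Matrix.single t s ((Ψ ⊙ c) t s)‖ = ‖c t s • Matrix.single t s (Ψ t s)‖ := by
        rw [Matrix.smul_single, Matrix.hadamard_apply, smul_eq_mul, mul_comm]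
    _ ≤ ‖Matrix.single t s (Ψ t s)‖ * q := by
        rw [norm_smul, mul_comm]
        gcongr
        exact hc.norm_apply_le hq t s

variable [DecidableEq S] {p : T → S → X} {m : ℕ} {C q : ℝ} {Ψ c : Matrix T S ℂ}

lemma norm_hadamard_le_of_rowColBounded_of_finite [Finite X] (hp : HasBoundedFibers p m)
    (hC : 0 ≤ C) (hΨ : ∀ (w : X → ℤˣ) (D : Matrix T S ℂ), ‖signTwist w p (Ψ ⊙ D)‖ ≤ C * ‖D‖)
    (hq : 0 < q) (hc : RowColBounded c q) : ‖Ψ ⊙ c‖ ≤ C * √(3 * m + 1) * q := by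
  classical
  have := Fintype.ofFinite X
  refine le_mul_of_halving (P := RowColBounded) (f := fun c => ‖Ψ ⊙ c‖)
    (fun c q hq hc => hc.norm_hadamard_le hq.le Ψ) (fun c q hq hc => ?_) hq hc
  have hr : 0 < √(3 * m + 1) * q := by positivity
  refine ⟨averagedRemainder (√(3 * m + 1) * q) p c,
    rowColBounded_averagedRemainder hp hc hr ?_, ?_⟩
  · rw [mul_pow, Real.sq_sqrt (by positivity)]
    gcongr
    exact (lt_add_one _).le
  · refine (norm_hadamard_le_add_averagedRemainder hC hΨ hr c).trans_eq ?_
    ring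

theorem norm_hadamard_le_of_rowColBounded (hp : HasBoundedFibers p m) (hC : 0 ≤ C)
    (hΨ : ∀ (w : X → ℤˣ) (D : Matrix T S ℂ), ‖signTwist w p (Ψ ⊙ D)‖ ≤ C * ‖D‖) (hq : 0 < q)
    (hc : RowColBounded c q) : ‖Ψ ⊙ c‖ ≤ C * √(3 * m + 1) * q := by
  let Y := Set.range (Function.uncurry p)
  let p' : T → S → Y := fun t s => ⟨p t s, (t, s), rfl⟩
  refine norm_hadamard_le_of_rowColBounded_of_finite (p := p')
    (.of_comp_injective Subtype.val_injective hp) hC (fun w D => ?_) hq hc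
  convert hΨ (Function.extend Subtype.val w 1) D using 2
  ext t s
  simp only [signTwist_apply]
  rw [← Subtype.val_injective.extend_apply w 1 (p' t s)]

end FiniteMultiplier

section OrthonormalFamilies

lemma norm_comp_comp_le {𝕜 E F G H : Type*} [NontriviallyNormedField 𝕜]
    [SeminormedAddCommGroup E] [NormedSpace 𝕜 E] [SeminormedAddCommGroup F] [NormedSpace 𝕜 F]
    [SeminormedAddCommGroup G] [NormedSpace 𝕜 G] [SeminormedAddCommGroup H] [NormedSpace 𝕜 H]
    {U : G →L[𝕜] H} {V : E →L[𝕜] F} (hU : ‖U‖ ≤ 1) (hV : ‖V‖ ≤ 1) (A : F →L[𝕜] G) :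
    ‖U ∘L A ∘L V‖ ≤ ‖A‖ := by
  calc ‖U ∘L A ∘L V‖ ≤ ‖U‖ * (‖A‖ * ‖V‖) :=
        (opNorm_comp_le _ _).trans (by gcongr; exact opNorm_comp_le _ _)
    _ ≤ 1 * (‖A‖ * 1) := by gcongr
    _ = ‖A‖ := by rw [mul_one, one_mul]

variable {E F H K : Type*} [Fintype E] [Fintype F]
  [NormedAddCommGroup H] [InnerProductSpace ℂ H] [NormedAddCommGroup K] [InnerProductSpace ℂ K]
  {v : E → H} {u : F → K}

/-- The isometric embedding of `ℓ²(E)` sending the standard basis to the orthonormal family `v`. -/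
def orthonormalEmbedding (hv : Orthonormal ℂ v) : EuclideanSpace ℂ E →ₗᵢ[ℂ] H :=
  (Fintype.linearCombination ℂ v ∘ₗ (WithLp.linearEquiv 2 ℂ (E → ℂ)).toLinearMap).isometryOfInner
    fun x y => by
      simp [Fintype.linearCombination_apply, hv.inner_sum, PiLp.inner_apply, mul_comm]

lemma orthonormalEmbedding_apply (hv : Orthonormal ℂ v) (x : EuclideanSpace ℂ E) :
    orthonormalEmbedding hv x = ∑ s, x s • v s :=
  rfl

variable [DecidableEq E]

lemma orthonormalEmbedding_single (hv : Orthonormal ℂ v) (s : E) :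
    orthonormalEmbedding hv (EuclideanSpace.single s 1) = v s := by
  simp [orthonormalEmbedding_apply]

lemma inner_single_matrixOperator_single [DecidableEq F] (D : Matrix F E ℂ) (t : F) (s : E) :
    inner ℂ (EuclideanSpace.single t 1) (matrixOperator D (EuclideanSpace.single s 1)) = D t s := by
  rw [EuclideanSpace.inner_single_left, map_one, one_mul]
  simp [matrixOperator_apply]

lemma norm_matrix_inner_le [CompleteSpace K] (hv : Orthonormal ℂ v) (hu : Orthonormal ℂ u)
    (A : H →L[ℂ] K) : ‖Matrix.of fun t s => inner ℂ (u t) (A (v s))‖ ≤ ‖A‖ := by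
  classical
  set V := (orthonormalEmbedding hv).toContinuousLinearMap
  set U := (orthonormalEmbedding hu).toContinuousLinearMap
  have compression : Matrix.of (fun t s => inner ℂ (u t) (A (v s)))
      = matrixOperator.symm (adjoint U ∘L A ∘L V) := by
    ext t s
    rw [← inner_single_matrixOperator_single (matrixOperator.symm _), LinearEquiv.apply_symm_apply,
      comp_apply, comp_apply, adjoint_inner_right]
    simp [U, V, orthonormalEmbedding_single]
  rw [compression, ← norm_matrixOperator, LinearEquiv.apply_symm_apply]
  refine norm_comp_comp_le ?_ (LinearIsometry.norm_toContinuousLinearMap_le _) A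
  rw [LinearIsometryEquiv.norm_map]
  exact LinearIsometry.norm_toContinuousLinearMap_le _

lemma exists_inner_eq_matrix [CompleteSpace H] (hv : Orthonormal ℂ v) (hu : Orthonormal ℂ u)
    (D : Matrix F E ℂ) :
    ∃ A : H →L[ℂ] K, (∀ t s, inner ℂ (u t) (A (v s)) = D t s) ∧ ‖A‖ ≤ ‖D‖ := by
  classical
  set V := (orthonormalEmbedding hv).toContinuousLinearMap
  set U := (orthonormalEmbedding hu).toContinuousLinearMap
  refine ⟨U ∘L matrixOperator D ∘L adjoint V, fun t s => ?_, ?_⟩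
  · have adjoint_apply : adjoint V (v s) = EuclideanSpace.single s 1 := by
      rw [← orthonormalEmbedding_single hv]
      exact DFunLike.congr_fun (orthonormalEmbedding hv).adjoint_comp_self _
    rw [comp_apply, comp_apply, adjoint_apply, ← orthonormalEmbedding_single hu,
      LinearIsometry.coe_toContinuousLinearMap, LinearIsometry.inner_map_map,
      inner_single_matrixOperator_single]
  · rw [← norm_matrixOperator]
    refine norm_comp_comp_le (LinearIsometry.norm_toContinuousLinearMap_le _) ?_ _
    rw [LinearIsometryEquiv.norm_map]
    exact LinearIsometry.norm_toContinuousLinearMap_le _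

end OrthonormalFamilies

section Ell2

open scoped lp

variable {S T : Type*}

/-- The canonical orthonormal basis of `ℓ²(S)`. -/
def ell2Basis (S : Type*) : HilbertBasis S ℂ ℓ²(S, ℂ) :=
  .ofRepr (LinearIsometryEquiv.refl ℂ _)

lemma ell2Basis_apply [DecidableEq S] (s : S) : ell2Basis S s = lp.single 2 s 1 :=
  ((ell2Basis S).repr_symm_single s).symm

lemma inner_ell2Basis_left (s : S) (x : ℓ²(S, ℂ)) : inner ℂ (ell2Basis S s) x = x s :=
  ((ell2Basis S).repr_apply_apply x s).symm

lemma orthonormal_ell2Basis_coe (E : Finset S) : Orthonormal ℂ fun s : E => ell2Basis S s :=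
  (ell2Basis S).orthonormal.comp _ Subtype.val_injective

/-- The finite section of the infinite matrix `b` with rows in `F` and columns in `E`. -/
def finiteSection (b : Matrix T S ℂ) (F : Finset T) (E : Finset S) : Matrix F E ℂ :=
  b.submatrix (↑) (↑)

lemma sum_norm_sum_mul_sq_le [DecidableEq S] (b : Matrix T S ℂ) (F : Finset T) (E : Finset S)
    (x : S → ℂ) : ∑ t ∈ F, ‖∑ s ∈ E, x s * b t s‖ ^ 2
      ≤ ‖finiteSection b F E‖ ^ 2 * ∑ s ∈ E, ‖x s‖ ^ 2 := by
  have bound := (matrixOperator (finiteSection b F E)).le_opNorm (WithLp.toLp 2 fun s : E => x s)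
  rw [norm_matrixOperator] at bound
  have := pow_le_pow_left₀ (norm_nonneg _) bound 2
  rw [mul_pow, EuclideanSpace.norm_sq_eq, EuclideanSpace.norm_sq_eq, matrixOperator_apply] at this
  simpa [Matrix.mulVec, dotProduct, finiteSection, mul_comm, ← Finset.sum_coe_sort F,
    ← Finset.sum_coe_sort E] using this

variable [DecidableEq S] {b : Matrix T S ℂ} {M : ℝ}

lemma memℓp_column (hb : ∀ F E, ‖finiteSection b F E‖ ≤ M) (s : S) : Memℓp (fun t => b t s) 2 :=
  memℓp_gen' (C := M ^ 2) fun F => by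
    calc ∑ t ∈ F, ‖b t s‖ ^ (2 : ℝ≥0∞).toReal = ∑ t ∈ F, ‖∑ s' ∈ {s}, 1 * b t s'‖ ^ 2 := by simp
      _ ≤ ‖finiteSection b F {s}‖ ^ 2 * ∑ _s ∈ {s}, ‖(1 : ℂ)‖ ^ 2 :=
        sum_norm_sum_mul_sq_le b F {s} 1
      _ ≤ M ^ 2 * 1 := by
        gcongr
        · exact hb F {s}
        · simp
      _ = M ^ 2 := mul_one _

/-- The columns of an infinite matrix with bounded finite sections, as vectors of `ℓ²(T)`. -/
def ell2Column (hb : ∀ F E, ‖finiteSection b F E‖ ≤ M) (s : S) : ℓ²(T, ℂ) :=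
  ⟨fun t => b t s, memℓp_column hb s⟩

lemma linearCombination_ell2Column_apply (hb : ∀ F E, ‖finiteSection b F E‖ ≤ M) (x : S →₀ ℂ)
    (t : T) : Finsupp.linearCombination ℂ (ell2Column hb) x t = ∑ s ∈ x.support, x s * b t s := by
  rw [Finsupp.linearCombination_apply, Finsupp.sum, lp.coeFn_sum, Finset.sum_apply]
  rfl

lemma norm_linearCombination_sq {ι H : Type*} [NormedAddCommGroup H] [InnerProductSpace ℂ H]
    {v : ι → H} (hv : Orthonormal ℂ v) (x : ι →₀ ℂ) :
    ‖Finsupp.linearCombination ℂ v x‖ ^ 2 = ∑ i ∈ x.support, ‖x i‖ ^ 2 := by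
  rw [← Complex.ofReal_inj, Complex.ofReal_pow]
  have := hv.inner_finsupp_eq_sum_left x x
  simp only [inner_self_eq_norm_sq_to_K, RCLike.conj_mul, Finsupp.sum] at this
  exact_mod_cast this

lemma norm_linearCombination_ell2Column_le (hM : 0 ≤ M) (hb : ∀ F E, ‖finiteSection b F E‖ ≤ M)
    (x : S →₀ ℂ) : ‖Finsupp.linearCombination ℂ (ell2Column hb) x‖
      ≤ M * ‖Finsupp.linearCombination ℂ (ell2Basis S) x‖ := by
  refine lp.norm_le_of_forall_sum_le (by norm_num) (by positivity) fun F => ?_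
  simp only [ENNReal.toReal_ofNat, Real.rpow_ofNat, linearCombination_ell2Column_apply]
  rw [mul_pow, norm_linearCombination_sq (ell2Basis S).orthonormal]
  refine (sum_norm_sum_mul_sq_le b F x.support x).trans ?_
  gcongr
  exact hb F x.support

theorem exists_clm_of_norm_finiteSection_le (hM : 0 ≤ M) (hb : ∀ F E, ‖finiteSection b F E‖ ≤ M) :
    ∃ B : ℓ²(S, ℂ) →L[ℂ] ℓ²(T, ℂ),
      (∀ s t, inner ℂ (ell2Basis T t) (B (ell2Basis S s)) = b t s) ∧ ‖B‖ ≤ M := by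
  have dense : DenseRange (Finsupp.linearCombination ℂ (ell2Basis S)) := by
    rw [DenseRange, ← LinearMap.coe_range, Finsupp.range_linearCombination,
      Submodule.dense_iff_topologicalClosure_eq_top]
    exact (ell2Basis S).dense_span
  refine ⟨_, fun s t => ?_,
    LinearMap.opNorm_extendOfNorm_le dense hM (norm_linearCombination_ell2Column_le hM hb)⟩
  have := LinearMap.extendOfNorm_eq dense ⟨M, norm_linearCombination_ell2Column_le hM hb⟩
    (Finsupp.single s 1)
  rw [Finsupp.linearCombination_single, Finsupp.linearCombination_single, one_smul, one_smul]
    at this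
  rw [this]
  exact inner_ell2Basis_left t _

end Ell2

section SchurMultiplier

open scoped lp

variable {S T : Type*} {ψ : S × T → ℂ} {C : ℝ}

lemma isSchurMultiplier_iff_ell2Basis : IsSchurMultiplier ψ C ↔
    ∀ A : ℓ²(S, ℂ) →L[ℂ] ℓ²(T, ℂ), ∃ B : ℓ²(S, ℂ) →L[ℂ] ℓ²(T, ℂ),
      (∀ s t, inner ℂ (ell2Basis T t) (B (ell2Basis S s))
        = ψ (s, t) * inner ℂ (ell2Basis T t) (A (ell2Basis S s))) ∧ ‖B‖ ≤ C * ‖A‖ := by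
  classical
  simp only [IsSchurMultiplier, ell2Basis_apply]

lemma IsSchurMultiplier.mono {C' : ℝ} (h : IsSchurMultiplier ψ C) (hC : C ≤ C') :
    IsSchurMultiplier ψ C' := fun A =>
  let ⟨B, hB, hBC⟩ := h A
  ⟨B, hB, hBC.trans (by gcongr)⟩

/-- The kernel `ψ` as a matrix; as for operators, rows are indexed by the target. -/
def kernelMatrix (ψ : S × T → ℂ) : Matrix T S ℂ :=
  Matrix.of fun t s => ψ (s, t)

theorem isSchurMultiplier_iff_norm_hadamard_le [DecidableEq S] (hC : 0 ≤ C) :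
    IsSchurMultiplier ψ C ↔ ∀ (F : Finset T) (E : Finset S) (D : Matrix F E ℂ),
      ‖finiteSection (kernelMatrix ψ) F E ⊙ D‖ ≤ C * ‖D‖ := by
  rw [isSchurMultiplier_iff_ell2Basis]
  refine ⟨fun h F E D => ?_, fun h A => ?_⟩
  · obtain ⟨A, hA, hAD⟩ :=
      exists_inner_eq_matrix (orthonormal_ell2Basis_coe E) (orthonormal_ell2Basis_coe F) D
    obtain ⟨B, hB, hBA⟩ := h A
    calc ‖finiteSection (kernelMatrix ψ) F E ⊙ D‖
        = ‖Matrix.of fun (t : F) (s : E) => inner ℂ (ell2Basis T t) (B (ell2Basis S s))‖ := by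
          congr 1
          ext t s
          rw [Matrix.of_apply, hB, hA]
          rfl
      _ ≤ ‖B‖ :=
        norm_matrix_inner_le (orthonormal_ell2Basis_coe E) (orthonormal_ell2Basis_coe F) B
      _ ≤ C * ‖D‖ := hBA.trans (by gcongr)
  · set a : Matrix T S ℂ := Matrix.of fun t s => inner ℂ (ell2Basis T t) (A (ell2Basis S s))
    exact exists_clm_of_norm_finiteSection_le (b := kernelMatrix ψ ⊙ a) (by positivity)
      fun F E => (h F E (finiteSection a F E)).trans (by
        gcongr
        exact norm_matrix_inner_le (orthonormal_ell2Basis_coe E) (orthonormal_ell2Basis_coe F) A)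

end SchurMultiplier

theorem stmt_15_general {S T X : Type*} (p : S × T → X) (m : ℕ)
    (hcol : ∀ t₀ x, {s | p (s, t₀) = x}.encard ≤ m)
    (hrow : ∀ s₀ x, {t | p (s₀, t) = x}.encard ≤ m)
    (ψ : S × T → ℂ) (C : ℝ)
    (hψ : ∀ w : X → ℤˣ, IsSchurMultiplier (fun q => w (p q) • ψ q) C) (ξ : S × T → ℂ)
    (hξ : ∀ q, ‖ξ q‖ ≤ 1) : IsSchurMultiplier (fun q => ξ q * ψ q) (|C| * √(3 * m + 1)) := by
  classical
  rw [isSchurMultiplier_iff_norm_hadamard_le (by positivity)]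
  intro F E D
  obtain rfl | hD := eq_or_ne D 0
  · simp
  have fibers : HasBoundedFibers (fun (t : F) (s : E) => p (s.1, t.1)) m :=
    HasBoundedFibers.comp_injective (p := fun t s => p (s, t)) ⟨hcol, hrow⟩
      Subtype.val_injective Subtype.val_injective
  have signs (w : X → ℤˣ) (D' : Matrix F E ℂ) :
      ‖signTwist w (fun t s => p (s.1, t.1)) (finiteSection (kernelMatrix ψ) F E ⊙ D')‖
        ≤ |C| * ‖D'‖ := by
    convert (isSchurMultiplier_iff_norm_hadamard_le (abs_nonneg C)).1
      ((hψ w).mono (le_abs_self C)) F E D' using 2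
    ext t s
    simp [finiteSection, kernelMatrix, smul_mul_assoc]
  have bounded : RowColBounded (finiteSection (kernelMatrix ξ) F E ⊙ D) ‖D‖ :=
    (rowColBounded_l2_opNorm D).of_norm_le fun t s => by
      rw [Matrix.hadamard_apply, norm_mul]
      exact mul_le_of_le_one_left (norm_nonneg _) (hξ _)
  convert norm_hadamard_le_of_rowColBounded fibers (abs_nonneg C) signs (norm_pos_iff.2 hD) bounded
    using 2
  ext t s
  simp only [finiteSection, kernelMatrix, Matrix.hadamard_apply, Matrix.submatrix_apply,
    Matrix.of_apply]
  ring

/-- Corollary 0.4: given `m` and `C`, there is `C'` (depending only on `C`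
and `m`) such that whenever `p : S × T → X` has all fibers of sections bounded by `m` and
`φ : X → ℂ` is such that `(s,t) ↦ ε(p(s,t))·φ(p(s,t))` is a Schur multiplier of norm at
most `C` for every `ε : X → ℂ` with `|ε| ≤ 1`, then `(s,t) ↦ ξ(s,t)·φ(p(s,t))` is a Schur
multiplier of norm at most `C'` for every `ξ : S × T → ℂ` with `|ξ| ≤ 1`. -/
theorem stmt_15 (m : ℕ) (C : ℝ) :
    ∃ C' : ℝ, ∀ (S T X : Type) (p : S × T → X),
      (∀ (t₀ : T) (x : X), {s : S | p (s, t₀) = x}.encard ≤ m) →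
      (∀ (s₀ : S) (x : X), {t : T | p (s₀, t) = x}.encard ≤ m) →
      ∀ φ : X → ℂ,
      (∀ ε : X → ℂ, (∀ x, ‖ε x‖ ≤ 1) →
        IsSchurMultiplier (fun q : S × T => ε (p q) * φ (p q)) C) →
      ∀ ξ : S × T → ℂ, (∀ q, ‖ξ q‖ ≤ 1) →
        IsSchurMultiplier (fun q : S × T => ξ q * φ (p q)) C' := by
  refine ⟨|C| * √(3 * m + 1), fun S T X p hcol hrow φ hφ ξ hξ =>
    stmt_15_general p m hcol hrow (φ ∘ p) C (fun w => ?_) ξ hξ⟩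
  simpa [Units.smul_def] using hφ (fun x => (w x : ℤ)) fun x => by
    obtain h | h := Int.units_eq_one_or (w x) <;> simp [h]
end Averaging
end
end

section
/- Let G be a group, φ : G → ℂ, and C ≥ 0. Suppose that for every complex Hilbert space H and every finitely supported a : G → B(H) one has ‖Σ_{x∈G} φ(x) λ(x) ⊗ a(x)‖ ≤ C · max{ ‖Σ_x a(x)* a(x)‖^{1/2}, ‖Σ_x a(x) a(x)*‖^{1/2} }. Then for every ε : G → ℂ with |ε(x)| ≤ 1 for all x, and every complex Hilbert space H and finitely supported a : G → B(H), ‖Σ_{x∈G} ε(x) φ(x) λ(x) ⊗ a(x)‖ ≤ C · ‖Σ_{x∈G} λ(x) ⊗ a(x)‖. -/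
open scoped ENNReal NNReal
open MeasureTheory ContinuousLinearMap

noncomputable section

/-! The operator `∑ λ(x) ⊗ a(x)` sends `δ₁ ⊗ ξ` to the family `(a(x) ξ)ₓ`, so its squared norm
dominates the norm of `∑ a(x)* a(x)`. Its adjoint is `∑ λ(x⁻¹) ⊗ a(x)*`, so its squared norm also
dominates the norm of `∑ a(x) a(x)*`. Neither bound is lost when `a` is replaced by `ε • a` with
`|ε| ≤ 1`, and the hypothesis applied to `ε • a` gives the claim. -/

section RCLike

variable {𝕜 : Type*} [RCLike 𝕜]

section RowColNorm

variable {ι E F : Type*}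
  [NormedAddCommGroup E] [InnerProductSpace 𝕜 E] [CompleteSpace E]
  [NormedAddCommGroup F] [InnerProductSpace 𝕜 F] [CompleteSpace F]

theorem reApplyInnerSelf_sum_adjoint_comp_self (s : Finset ι) (a : ι → E →L[𝕜] F) (ξ : E) :
    (∑ x ∈ s, (adjoint (a x)).comp (a x)).reApplyInnerSelf ξ = ∑ x ∈ s, ‖a x ξ‖ ^ 2 := by
  simp only [reApplyInnerSelf_apply, sum_apply, comp_apply, sum_inner, map_sum,
    adjoint_inner_left, inner_self_eq_norm_sq]

theorem norm_sum_adjoint_comp_self_le {s : Finset ι} {a : ι → E →L[𝕜] F} {M : ℝ} (hM : 0 ≤ M)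
    (ha : ∀ ξ, ∑ x ∈ s, ‖a x ξ‖ ^ 2 ≤ M * ‖ξ‖ ^ 2) :
    ‖∑ x ∈ s, (adjoint (a x)).comp (a x)‖ ≤ M := by
  have hpos : (∑ x ∈ s, (adjoint (a x)).comp (a x)).IsPositive :=
    isPositive_sum s fun x _ => isPositive_adjoint_comp_self (a x)
  rw [norm_eq_iSup_rayleighQuotient _ hpos.isSymmetric]
  refine ciSup_le fun ξ => ?_
  rw [rayleighQuotient, reApplyInnerSelf_sum_adjoint_comp_self, abs_of_nonneg (by positivity)]
  exact div_le_of_le_mul₀ (by positivity) hM (ha ξ)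

/-- The norm of a finite family of operators in the intersection of the row and column operator
spaces, `max {‖∑ a(x)* a(x)‖^(1/2), ‖∑ a(x) a(x)*‖^(1/2)}`. -/
def rowColNorm (s : Finset ι) (a : ι → E →L[𝕜] F) : ℝ :=
  max (√‖∑ x ∈ s, (adjoint (a x)).comp (a x)‖) (√‖∑ x ∈ s, (a x).comp (adjoint (a x))‖)

theorem rowColNorm_le {s : Finset ι} {a : ι → E →L[𝕜] F} {M : ℝ} (hM : 0 ≤ M)
    (hcol : ∀ ξ, ∑ x ∈ s, ‖a x ξ‖ ^ 2 ≤ M ^ 2 * ‖ξ‖ ^ 2)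
    (hrow : ∀ η, ∑ x ∈ s, ‖adjoint (a x) η‖ ^ 2 ≤ M ^ 2 * ‖η‖ ^ 2) :
    rowColNorm s a ≤ M := by
  refine max_le (Real.sqrt_le_iff.2 ⟨hM, norm_sum_adjoint_comp_self_le (sq_nonneg M) hcol⟩)
    (Real.sqrt_le_iff.2 ⟨hM, ?_⟩)
  simpa only [adjoint_adjoint] using norm_sum_adjoint_comp_self_le (sq_nonneg M) hrow

theorem rowColNorm_support_onFinset {s : Finset ι} {a : ι → E →L[𝕜] F}
    (ha : ∀ x, a x ≠ 0 → x ∈ s) :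
    rowColNorm (Finsupp.onFinset s a ha).support a = rowColNorm s a := by
  have hcol := Finsupp.onFinset_sum ha (g := fun _ A => (adjoint A).comp A) (by simp)
  have hrow := Finsupp.onFinset_sum ha (g := fun _ A => A.comp (adjoint A)) (by simp)
  exact congrArg₂ (fun A B => max (√‖A‖) (√‖B‖)) hcol hrow

end RowColNorm

theorem sum_norm_sq_smul_le {ι E : Type*} [SeminormedAddCommGroup E] [NormedSpace 𝕜 E]
    (s : Finset ι) {c : ι → 𝕜} (hc : ∀ x, ‖c x‖ ≤ 1) (v : ι → E) :
    ∑ x ∈ s, ‖c x • v x‖ ^ 2 ≤ ∑ x ∈ s, ‖v x‖ ^ 2 := by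
  gcongr with x
  exact (norm_smul_le _ _).trans (mul_le_of_le_one_left (norm_nonneg _) (hc x))

section Convolution

variable {G E F : Type*} [Group G] [NormedAddCommGroup E] [NormedSpace 𝕜 E]
  [NormedAddCommGroup F] [NormedSpace 𝕜 F]
  {s : Finset G} {a : G → E →L[𝕜] F}
  {T : lp (fun _ : G => E) 2 →L[𝕜] lp (fun _ : G => F) 2}

/-- `T` is the operator `∑ x ∈ s, λ(x) ⊗ a(x)` from `ℓ²(G; E)` to `ℓ²(G; F)`, with `λ` the left
regular representation. The values of `a` outside the finite set `s` are ignored. -/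
def IsConvolution (s : Finset G) (a : G → E →L[𝕜] F)
    (T : lp (fun _ : G => E) 2 →L[𝕜] lp (fun _ : G => F) 2) : Prop :=
  ∀ (f : lp (fun _ : G => E) 2) (t : G), T f t = ∑ x ∈ s, a x (f (x⁻¹ * t))

namespace IsConvolution

theorem apply_single [DecidableEq G] (hT : IsConvolution s a T) (t : G) (ξ : E) :
    T (lp.single 2 t ξ) = ∑ x ∈ s, lp.single 2 (x * t) (a x ξ) := by
  ext u
  rw [hT, lp.coeFn_sum, Finset.sum_apply]
  refine Finset.sum_congr rfl fun x _ => ?_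
  simp only [lp.single_apply, Pi.single_apply, inv_mul_eq_iff_eq_mul, apply_ite (a x), map_zero]

theorem sum_norm_sq_apply_le (hT : IsConvolution s a T) (ξ : E) :
    ∑ x ∈ s, ‖a x ξ‖ ^ 2 ≤ ‖T‖ ^ 2 * ‖ξ‖ ^ 2 := by
  classical
  calc ∑ x ∈ s, ‖a x ξ‖ ^ 2 = ‖T (lp.single 2 1 ξ)‖ ^ 2 := by
        have hnorm := lp.norm_sum_single (E := fun _ : G => F) (p := 2) (by norm_num) (a · ξ) s
        simp only [ENNReal.toReal_ofNat, Real.rpow_ofNat] at hnorm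
        simp only [hT.apply_single, mul_one, hnorm]
    _ ≤ (‖T‖ * ‖(lp.single 2 1 ξ : lp (fun _ : G => E) 2)‖) ^ 2 := by
        gcongr
        exact T.le_opNorm _
    _ = ‖T‖ ^ 2 * ‖ξ‖ ^ 2 := by rw [lp.norm_single (by norm_num), mul_pow]

end IsConvolution

end Convolution

section HilbertConvolution

variable {G E F : Type*} [Group G]
  [NormedAddCommGroup E] [InnerProductSpace 𝕜 E] [CompleteSpace E]
  [NormedAddCommGroup F] [InnerProductSpace 𝕜 F] [CompleteSpace F]
  {s : Finset G} {a : G → E →L[𝕜] F}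
  {T : lp (fun _ : G => E) 2 →L[𝕜] lp (fun _ : G => F) 2}

namespace IsConvolution

protected theorem adjoint (hT : IsConvolution s a T) :
    IsConvolution (s.map (Equiv.inv G).toEmbedding) (fun x => adjoint (a x⁻¹)) (adjoint T) := by
  classical
  intro g t
  refine ext_inner_left 𝕜 fun η => ?_
  calc inner 𝕜 η (adjoint T g t)
      = inner 𝕜 (T (lp.single 2 t η)) g := by
        rw [← adjoint_inner_right, lp.inner_single_left]
    _ = ∑ x ∈ s, inner 𝕜 (a x η) (g (x * t)) := by
        rw [hT.apply_single, sum_inner]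
        simp only [lp.inner_single_left]
    _ = inner 𝕜 η (∑ x ∈ s.map (Equiv.inv G).toEmbedding, adjoint (a x⁻¹) (g (x⁻¹ * t))) := by
        simp [inner_sum, adjoint_inner_right]

theorem sum_norm_sq_adjoint_apply_le (hT : IsConvolution s a T) (η : F) :
    ∑ x ∈ s, ‖adjoint (a x) η‖ ^ 2 ≤ ‖T‖ ^ 2 * ‖η‖ ^ 2 := by
  simpa using hT.adjoint.sum_norm_sq_apply_le η

theorem rowColNorm_smul_le (hT : IsConvolution s a T) {ε : G → 𝕜} (hε : ∀ x, ‖ε x‖ ≤ 1) :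
    rowColNorm s (fun x => ε x • a x) ≤ ‖T‖ := by
  refine rowColNorm_le (norm_nonneg T) (fun ξ => ?_) fun η => ?_
  · exact (sum_norm_sq_smul_le s hε _).trans (hT.sum_norm_sq_apply_le ξ)
  · simp only [map_smulₛₗ, smul_apply]
    exact (sum_norm_sq_smul_le s (fun x => by simpa using hε x) _).trans
      (hT.sum_norm_sq_adjoint_apply_le η)

end IsConvolution

end HilbertConvolution

section RowColBound

variable {G H : Type*} [Group G] [NormedAddCommGroup H] [InnerProductSpace 𝕜 H] [CompleteSpace H]
  {φ : G → 𝕜} {C : ℝ}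

variable (H) in
/-- The map `a ↦ ∑ φ(x) λ(x) ⊗ a(x)`, on finitely supported families `a` in `B(H)`, is bounded by
`C` from the row-column norm to the operator norm on `ℓ²(G; H)`. The Hilbert space `H` is fixed. -/
def HasRowColBound (φ : G → 𝕜) (C : ℝ) : Prop :=
  ∀ (a : G →₀ (H →L[𝕜] H)) (T : lp (fun _ : G => H) 2 →L[𝕜] lp (fun _ : G => H) 2),
    IsConvolution a.support (fun x => φ x • a x) T → ‖T‖ ≤ C * rowColNorm a.support a

namespace HasRowColBound

theorem nonneg [Nontrivial H] (h : HasRowColBound H φ C) : 0 ≤ C := by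
  have hsupp : (Finsupp.single (1 : G) (ContinuousLinearMap.id 𝕜 H)).support = {1} :=
    Finsupp.support_single _ one_ne_zero
  have hbound := h (.single 1 (.id 𝕜 H)) (φ 1 • .id 𝕜 _) fun f t => by simp [hsupp]
  have hnorm : rowColNorm {1} (Finsupp.single (1 : G) (ContinuousLinearMap.id 𝕜 H)) = 1 := by
    simp [rowColNorm]
  rw [hsupp, hnorm, mul_one] at hbound
  exact (norm_nonneg _).trans hbound

theorem norm_le_of_isConvolution (h : HasRowColBound H φ C) {s : Finset G} {a : G → H →L[𝕜] H}
    (ha : ∀ x, a x ≠ 0 → x ∈ s) {T : lp (fun _ : G => H) 2 →L[𝕜] lp (fun _ : G => H) 2}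
    (hT : IsConvolution s (fun x => φ x • a x) T) : ‖T‖ ≤ C * rowColNorm s a := by
  have hconv : IsConvolution (Finsupp.onFinset s a ha).support (fun x => φ x • a x) T :=
    fun f t => (hT f t).trans (Finsupp.onFinset_sum ha
      (g := fun x A => (φ x • A) (f (x⁻¹ * t))) (by simp)).symm
  exact (h _ T hconv).trans_eq (congrArg (C * ·) (rowColNorm_support_onFinset ha))

end HasRowColBound

end RowColBound

theorem stmt_16_general {G H : Type*} [Group G] [NormedAddCommGroup H] [InnerProductSpace 𝕜 H]
    [CompleteSpace H] {φ : G → 𝕜} {C : ℝ} (h : HasRowColBound H φ C)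
    {ε : G → 𝕜} (hε : ∀ x, ‖ε x‖ ≤ 1) (a : G →₀ (H →L[𝕜] H))
    {T₁ T₂ : lp (fun _ : G => H) 2 →L[𝕜] lp (fun _ : G => H) 2}
    (hT₁ : IsConvolution a.support (fun x => (ε x * φ x) • a x) T₁)
    (hT₂ : IsConvolution a.support a T₂) :
    ‖T₁‖ ≤ C * ‖T₂‖ := by
  have hbound : ‖T₁‖ ≤ C * rowColNorm a.support (fun x => ε x • a x) := by
    refine h.norm_le_of_isConvolution (fun x hx => ?_) ?_
    · exact Finsupp.mem_support_iff.2 (right_ne_zero_of_smul hx)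
    · simpa only [smul_smul, mul_comm] using hT₁
  cases subsingleton_or_nontrivial H with
  | inl _ =>
    -- `C` may be negative here, so the bound on `‖T₁‖` is not enough.
    have : Subsingleton (lp (fun _ : G => H) 2) := ⟨fun _ _ => lp.ext (Subsingleton.elim _ _)⟩
    rw [Subsingleton.elim T₁ 0, Subsingleton.elim T₂ 0, norm_zero, mul_zero]
  | inr _ =>
    exact hbound.trans (mul_le_mul_of_nonneg_left (hT₂.rowColNorm_smul_le hε) h.nonneg)

end RCLike

/-- (v) ⇒ (i) of Theorem 0.1: if for every Hilbert space `H` and finitely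
supported `a : G → B(H)` one has
`‖Σ φ(x) λ(x) ⊗ a(x)‖ ≤ C · max{‖Σ a*a‖^{1/2}, ‖Σ aa*‖^{1/2}}`, then for every `ε` with
`|ε| ≤ 1` one has `‖Σ ε(x)φ(x) λ(x) ⊗ a(x)‖ ≤ C · ‖Σ λ(x) ⊗ a(x)‖`. -/
theorem stmt_16 {G : Type*} [Group G] (φ : G → ℂ) (C : ℝ)
    (h : ∀ (H : Type) [NormedAddCommGroup H] [InnerProductSpace ℂ H] [CompleteSpace H]
      (a : G →₀ (H →L[ℂ] H))
      (T : lp (fun _ : G => H) 2 →L[ℂ] lp (fun _ : G => H) 2),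
      (∀ (f : lp (fun _ : G => H) 2) (s : G),
        T f s = ∑ x ∈ a.support, φ x • ((a x) (f (x⁻¹ * s)))) →
      ‖T‖ ≤ C * max
        (Real.sqrt ‖∑ x ∈ a.support, (ContinuousLinearMap.adjoint (a x)).comp (a x)‖)
        (Real.sqrt ‖∑ x ∈ a.support, (a x).comp (ContinuousLinearMap.adjoint (a x))‖)) :
    ∀ (H : Type) [NormedAddCommGroup H] [InnerProductSpace ℂ H] [CompleteSpace H]
      (ε : G → ℂ), (∀ x, ‖ε x‖ ≤ 1) →
      ∀ (a : G →₀ (H →L[ℂ] H))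
        (T₁ T₂ : lp (fun _ : G => H) 2 →L[ℂ] lp (fun _ : G => H) 2),
        (∀ (f : lp (fun _ : G => H) 2) (s : G),
          T₁ f s = ∑ x ∈ a.support, (ε x * φ x) • ((a x) (f (x⁻¹ * s)))) →
        (∀ (f : lp (fun _ : G => H) 2) (s : G),
          T₂ f s = ∑ x ∈ a.support, (a x) (f (x⁻¹ * s))) →
        ‖T₁‖ ≤ C * ‖T₂‖ := by
  intro H _ _ _ ε hε a T₁ T₂ hT₁ hT₂
  exact stmt_16_general (h H) hε a hT₁ hT₂
end
end

section
/- There exists a constant K ≥ 1 (the Grothendieck constant works) with the following property: for all finite nonempty sets S and T and every ψ : S × T → ℂ that is a Schur multiplier of norm at most 1, there exist scalars λ_m ∈ ℂ and functions ε_m : S → ℂ, η_m : T → ℂ (m ∈ ℕ) with |ε_m(s)| ≤ 1 and |η_m(t)| ≤ 1 for all m, s, t, Σ_{m∈ℕ} |λ_m| ≤ K, and ψ(s,t) = Σ_{m∈ℕ} λ_m · ε_m(s) · η_m(t) for all (s,t) ∈ S × T (the series converging absolutely). -/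
open scoped ENNReal NNReal
open MeasureTheory ContinuousLinearMap

noncomputable section

/-!
Separating by Hahn-Banach in finite dimensions, a Schur multiplier of norm at most `C` is a limit
of multipliers `⟪y t, x s⟫` with Hilbert space vectors satisfying `‖x s‖ ^ 2, ‖y t‖ ^ 2 ≤ C`: a
functional that is nonnegative on all Gram data `(‖z i‖ ^ 2, z s * conj (z t))` says, after
rescaling the coordinates by the square roots of its weights, that a certain matrix has operator
norm at most `2`.

It remains to see that every `⟪y t, x s⟫` with `‖x s‖, ‖y t‖ ≤ 1` lies in a fixed multiple of the
convex hull `D` of the simple multipliers. Replacing the vectors by random sums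
`∑ k, σ k • B k i` with independent signs `σ k`, it becomes the average of products of scalar random
variables with second moment at most `1` and fourth moment at most `3`. Truncating these at level
`8` gives a point of `64 • D`, and the error is half of another element of the same Gram ball. Such
a bounded set is contained in `128 • D`.
-/

open scoped BigOperators ComplexConjugate

section RandomSigns

variable {ι E : Type*} [Fintype ι] [DecidableEq ι]

lemma expect_signs_eq_expect_flip {M : Type*} [AddCommMonoid M] [Module ℚ≥0 M]
    (F : (ι → ℤˣ) → M) (a : ι) :
    𝔼 σ, F σ = 𝔼 σ : ι → ℤˣ, F (σ * Pi.mulSingle a (-1)) :=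
  (Fintype.expect_equiv (Equiv.mulRight (Pi.mulSingle a (-1))) _ _ fun _ => rfl).symm

lemma expect_sign_mul_sign (i j : ι) :
    𝔼 σ : ι → ℤˣ, ((σ i : ℤ) : ℝ) * ((σ j : ℤ) : ℝ) = if i = j then 1 else 0 := by
  split_ifs with h
  · subst h
    simp [← Int.cast_mul, ← Units.val_mul]
  · have hflip := expect_signs_eq_expect_flip (fun σ => ((σ i : ℤ) : ℝ) * ((σ j : ℤ) : ℝ)) i
    simp only [Pi.mul_apply, Pi.mulSingle_eq_same, Pi.mulSingle_eq_of_ne' h, mul_one, mul_neg,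
      Units.val_neg, Int.cast_neg, neg_mul, Finset.expect_neg_distrib] at hflip
    linarith

lemma expect_sum_insert_signs [AddCommGroup E] [Module ℝ E] {I : Finset ι} {a : ι} (ha : a ∉ I)
    (x : ι → E) (F : E → ℝ) :
    𝔼 σ : ι → ℤˣ, F (∑ i ∈ insert a I, ((σ i : ℤ) : ℝ) • x i) =
      𝔼 σ : ι → ℤˣ, (F (∑ i ∈ I, ((σ i : ℤ) : ℝ) • x i + x a) +
        F (∑ i ∈ I, ((σ i : ℤ) : ℝ) • x i - x a)) / 2 := by
  set f : (ι → ℤˣ) → ℝ := fun σ => F (∑ i ∈ insert a I, ((σ i : ℤ) : ℝ) • x i)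
  have hf (σ) : f σ = F (∑ i ∈ I, ((σ i : ℤ) : ℝ) • x i + ((σ a : ℤ) : ℝ) • x a) := by
    simp only [f, Finset.sum_insert ha, add_comm]
  have hf_flip (σ : ι → ℤˣ) : f (σ * Pi.mulSingle a (-1)) =
      F (∑ i ∈ I, ((σ i : ℤ) : ℝ) • x i - ((σ a : ℤ) : ℝ) • x a) := by
    have hflip_mem {i} (hi : i ∈ I) : (σ * Pi.mulSingle a (-1) : ι → ℤˣ) i = σ i := by
      simp [Pi.mulSingle_eq_of_ne (ne_of_mem_of_not_mem hi ha)]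
    have hflip_self : (σ * Pi.mulSingle a (-1) : ι → ℤˣ) a = -σ a := by simp
    rw [hf, hflip_self, Finset.sum_congr rfl fun i hi => by rw [hflip_mem hi]]
    simp [sub_eq_add_neg]
  calc 𝔼 σ, f σ = 𝔼 σ, (f σ + f (σ * Pi.mulSingle a (-1))) / 2 := by
        rw [← Finset.expect_div, Finset.expect_add_distrib, ← expect_signs_eq_expect_flip f a,
          add_self_div_two]
    _ = _ := by
        refine Finset.expect_congr rfl fun σ _ => ?_
        rw [hf, hf_flip]
        obtain h | h := Int.units_eq_one_or (σ a) <;> simp [h, sub_eq_add_neg, add_comm]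

variable [NormedAddCommGroup E] [InnerProductSpace ℝ E]

lemma norm_add_pow_four_add_norm_sub_pow_four_le (x y : E) :
    ‖x + y‖ ^ 4 + ‖x - y‖ ^ 4 ≤ 2 * (‖x‖ ^ 4 + 6 * ‖x‖ ^ 2 * ‖y‖ ^ 2 + ‖y‖ ^ 4) := by
  have hinner : inner ℝ x y ^ 2 ≤ ‖x‖ ^ 2 * ‖y‖ ^ 2 := by
    rw [← mul_pow]
    exact sq_le_sq.2 ((abs_real_inner_le_norm x y).trans (le_abs_self _))
  calc ‖x + y‖ ^ 4 + ‖x - y‖ ^ 4 = (‖x + y‖ ^ 2) ^ 2 + (‖x - y‖ ^ 2) ^ 2 := by ring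
    _ = 2 * ((‖x‖ ^ 2 + ‖y‖ ^ 2) ^ 2 + 4 * inner ℝ x y ^ 2) := by
        rw [norm_add_sq_real, norm_sub_sq_real]; ring
    _ ≤ _ := by linarith

lemma expect_inner_sum_signs {𝕜 F : Type*} [RCLike 𝕜] [NormedAddCommGroup F]
    [InnerProductSpace 𝕜 F] [Module ℝ F] [IsScalarTower ℝ 𝕜 F] (I : Finset ι) (x y : ι → F) :
    𝔼 σ : ι → ℤˣ, inner 𝕜 (∑ i ∈ I, ((σ i : ℤ) : ℝ) • x i) (∑ i ∈ I, ((σ i : ℤ) : ℝ) • y i) =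
      ∑ i ∈ I, inner 𝕜 (x i) (y i) := by
  have hpair (i j : ι) : 𝔼 σ : ι → ℤˣ,
      inner 𝕜 (((σ i : ℤ) : ℝ) • x i) (((σ j : ℤ) : ℝ) • y j) =
        if i = j then inner 𝕜 (x i) (y j) else 0 := by
    calc _ = 𝔼 σ : ι → ℤˣ, ((((σ i : ℤ) : ℝ) * ((σ j : ℤ) : ℝ) : ℝ) : 𝕜) *
          inner 𝕜 (x i) (y j) :=
          Finset.expect_congr rfl fun σ _ => by
            rw [inner_smul_left_eq_smul, inner_smul_right_eq_smul, smul_smul,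
              RCLike.real_smul_eq_coe_mul]
      _ = _ := by
          rw [← Finset.expect_mul, ← RCLike.ofReal_expect, expect_sign_mul_sign]
          split_ifs <;> simp
  simp only [sum_inner, inner_sum, Finset.expect_sum_comm, hpair]
  exact Finset.sum_congr rfl fun i hi => by simp [hi]

lemma expect_norm_sum_signs_sq (I : Finset ι) (x : ι → E) :
    𝔼 σ : ι → ℤˣ, ‖∑ i ∈ I, ((σ i : ℤ) : ℝ) • x i‖ ^ 2 = ∑ i ∈ I, ‖x i‖ ^ 2 := by
  simpa only [real_inner_self_eq_norm_sq] using expect_inner_sum_signs (𝕜 := ℝ) I x x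

lemma expect_norm_sum_signs_pow_four_le (I : Finset ι) (x : ι → E) :
    𝔼 σ : ι → ℤˣ, ‖∑ i ∈ I, ((σ i : ℤ) : ℝ) • x i‖ ^ 4 ≤ 3 * (∑ i ∈ I, ‖x i‖ ^ 2) ^ 2 := by
  induction I using Finset.induction_on with
  | empty => simp
  | insert a I ha ih =>
    set r : (ι → ℤˣ) → E := fun σ => ∑ i ∈ I, ((σ i : ℤ) : ℝ) • x i
    calc 𝔼 σ : ι → ℤˣ, ‖∑ i ∈ insert a I, ((σ i : ℤ) : ℝ) • x i‖ ^ 4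
        = 𝔼 σ, (‖r σ + x a‖ ^ 4 + ‖r σ - x a‖ ^ 4) / 2 :=
          expect_sum_insert_signs ha x fun y => ‖y‖ ^ 4
      _ ≤ 𝔼 σ, (‖r σ‖ ^ 4 + 6 * ‖r σ‖ ^ 2 * ‖x a‖ ^ 2 + ‖x a‖ ^ 4) :=
          Finset.expect_le_expect fun σ _ => by
            linarith [norm_add_pow_four_add_norm_sub_pow_four_le (r σ) (x a)]
      _ = 𝔼 σ, ‖r σ‖ ^ 4 + 6 * (∑ i ∈ I, ‖x i‖ ^ 2) * ‖x a‖ ^ 2 + ‖x a‖ ^ 4 := by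
          rw [← expect_norm_sum_signs_sq I x]
          simp only [Finset.mul_expect, Finset.expect_mul, Finset.expect_add_distrib,
            Fintype.expect_const, r]
      _ ≤ 3 * (∑ i ∈ insert a I, ‖x i‖ ^ 2) ^ 2 := by
          rw [Finset.sum_insert ha]
          nlinarith [sq_nonneg (‖x a‖ ^ 2)]

end RandomSigns

section Truncation

variable {E : Type*} [NormedAddCommGroup E] {M : ℝ}

/-- The truncation of `z` at level `M`: `z` itself if `‖z‖ ≤ M`, and `0` otherwise. It splits a
random vector into a bounded part and a part that is small in mean square. -/
def truncate (M : ℝ) (z : E) : E :=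
  if ‖z‖ ≤ M then z else 0

lemma norm_truncate_le (hM : 0 ≤ M) (z : E) : ‖truncate M z‖ ≤ M := by
  unfold truncate
  split_ifs with h
  · exact h
  · simpa using hM

lemma norm_truncate_le_norm (z : E) : ‖truncate M z‖ ≤ ‖z‖ := by
  unfold truncate
  split_ifs <;> simp

lemma sq_mul_norm_sub_truncate_sq_le (hM : 0 ≤ M) (z : E) :
    M ^ 2 * ‖z - truncate M z‖ ^ 2 ≤ ‖z‖ ^ 4 := by
  unfold truncate
  split_ifs with h
  · simp
  · calc M ^ 2 * ‖z - 0‖ ^ 2 ≤ ‖z‖ ^ 2 * ‖z - 0‖ ^ 2 := by gcongr; exact (not_le.1 h).le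
      _ = ‖z‖ ^ 4 := by rw [sub_zero]; ring

variable {Ω : Type*} [Fintype Ω]

lemma expect_norm_truncate_sq_le (Z : Ω → E) :
    𝔼 ω, ‖truncate M (Z ω)‖ ^ 2 ≤ 𝔼 ω, ‖Z ω‖ ^ 2 :=
  Finset.expect_le_expect fun ω _ => by gcongr; exact norm_truncate_le_norm _

lemma sq_mul_expect_norm_sub_truncate_sq_le (hM : 0 ≤ M) (Z : Ω → E) :
    M ^ 2 * 𝔼 ω, ‖Z ω - truncate M (Z ω)‖ ^ 2 ≤ 𝔼 ω, ‖Z ω‖ ^ 4 := by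
  rw [Finset.mul_expect]
  exact Finset.expect_le_expect fun ω _ => sq_mul_norm_sub_truncate_sq_le hM _

end Truncation

section Convexity

variable {E : Type*}

lemma expect_prodMk {κ M N : Type*} [AddCommMonoid M] [AddCommMonoid N] [Module ℚ≥0 M]
    [Module ℚ≥0 N] (s : Finset κ) (f : κ → M) (g : κ → N) :
    𝔼 k ∈ s, (f k, g k) = (𝔼 k ∈ s, f k, 𝔼 k ∈ s, g k) :=
  Prod.ext (map_expect (LinearMap.fst ℚ≥0 M N) _ s) (map_expect (LinearMap.snd ℚ≥0 M N) _ s)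

lemma expect_mem_of_convex [AddCommGroup E] [Module ℝ E] [Module ℚ≥0 E] {κ : Type*} [Fintype κ]
    [Nonempty κ] {s : Set E} (hs : Convex ℝ s) {f : κ → E} (hf : ∀ k, f k ∈ s) :
    𝔼 k, f k ∈ s := by
  rw [Finset.expect, ← NNRat.cast_smul_eq_nnqsmul ℝ, Finset.smul_sum]
  refine hs.sum_mem (fun _ _ => by positivity) ?_ fun k _ => hf k
  simp

lemma exists_sum_smul_eq_of_mem_convexHull [AddCommGroup E] [Module ℝ E] [FiniteDimensional ℝ E]
    {s : Set E} {x : E} (hx : x ∈ convexHull ℝ s) :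
    ∃ w ∈ stdSimplex ℝ (Fin (Module.finrank ℝ E + 1)), ∃ z : Fin (Module.finrank ℝ E + 1) → E,
      (∀ i, z i ∈ s) ∧ ∑ i, w i • z i = x := by
  obtain ⟨ι, _, z, w, hz, hind, hw_pos, hw_sum, rfl⟩ := eq_pos_convex_span_of_mem_convexHull hx
  have hcard : Fintype.card ι ≤ Module.finrank ℝ E + 1 :=
    hind.card_le_finrank_succ.trans (Nat.succ_le_succ (Submodule.finrank_le _))
  have : Nonempty ι := by
    by_contra! h
    simp at hw_sum
  obtain ⟨e⟩ : Nonempty (ι ↪ Fin (Module.finrank ℝ E + 1)) :=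
    Function.Embedding.nonempty_of_card_le (by simpa using hcard)
  let v : Fin (Module.finrank ℝ E + 1) → ℝ := Function.extend e w 0
  have hv (i) : v (e i) = w i := e.injective.extend_apply w 0 i
  have hv_zero (j) (hj : j ∉ Set.range e) : v j = 0 :=
    Function.extend_apply' w _ j hj
  refine ⟨v, ⟨fun j => ?_, ?_⟩, z ∘ Function.invFun e, fun j => hz ⟨_, rfl⟩, ?_⟩
  · by_cases hj : j ∈ Set.range e
    · obtain ⟨i, rfl⟩ := hj
      exact (hv i).symm ▸ (hw_pos i).le
    · exact (hv_zero j hj).ge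
  · rw [← hw_sum]
    exact (Fintype.sum_of_injective e e.injective _ _ hv_zero fun i => (hv i).symm).symm
  · refine (Fintype.sum_of_injective e e.injective _ _ (fun j hj => ?_) fun i => ?_).symm
    · rw [hv_zero j hj, zero_smul]
    · rw [hv, Function.comp_apply, Function.leftInverse_invFun e.injective i]

lemma exists_hasSum_smul_of_mem_convexHull [AddCommGroup E] [Module ℝ E] [FiniteDimensional ℝ E]
    [TopologicalSpace E] {s : Set E} {x : E} (hx : x ∈ convexHull ℝ s) :
    ∃ (w : ℕ → ℝ) (z : ℕ → E), (∀ m, 0 ≤ w m) ∧ (∀ m, z m ∈ s) ∧ HasSum w 1 ∧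
      HasSum (fun m => w m • z m) x := by
  obtain ⟨w, hw, z, hz, rfl⟩ := exists_sum_smul_eq_of_mem_convexHull hx
  let v : ℕ → ℝ := Function.extend Fin.val w 0
  have hv (i) : v (Fin.val i) = w i := Fin.val_injective.extend_apply w 0 i
  have hv_zero (m) (hm : m ∉ Set.range (Fin.val (n := Module.finrank ℝ E + 1))) : v m = 0 :=
    Function.extend_apply' w (0 : ℕ → ℝ) m hm
  refine ⟨v, z ∘ Function.invFun Fin.val, fun m => ?_, fun m => hz _, ?_, ?_⟩
  · by_cases hm : m ∈ Set.range (Fin.val (n := Module.finrank ℝ E + 1))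
    · obtain ⟨i, rfl⟩ := hm
      exact (hw.1 i).trans_eq (hv i).symm
    · exact (hv_zero m hm).ge
  · rw [← Fin.val_injective.hasSum_iff hv_zero, ← hw.2]
    convert hasSum_fintype w
    exact funext hv
  · rw [← Fin.val_injective.hasSum_iff fun m hm => by rw [hv_zero m hm, zero_smul]]
    convert hasSum_fintype fun i => w i • z i
    rw [Function.comp_apply, hv, Function.comp_apply,
      Function.leftInverse_invFun Fin.val_injective]

lemma isCompact_convexHull [AddCommGroup E] [Module ℝ E] [TopologicalSpace E]
    [IsTopologicalAddGroup E] [ContinuousSMul ℝ E] [FiniteDimensional ℝ E] {s : Set E}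
    (hs : IsCompact s) : IsCompact (convexHull ℝ s) := by
  let ι := Fin (Module.finrank ℝ E + 1)
  have himage : convexHull ℝ s =
      (fun p : (ι → ℝ) × (ι → E) => ∑ i, p.1 i • p.2 i) ''
        (stdSimplex ℝ ι ×ˢ Set.univ.pi fun _ => s) := by
    refine Set.Subset.antisymm (fun x hx => ?_) ?_
    · obtain ⟨w, hw, z, hz, rfl⟩ := exists_sum_smul_eq_of_mem_convexHull hx
      exact ⟨(w, z), ⟨hw, fun i _ => hz i⟩, rfl⟩
    · rintro _ ⟨⟨w, z⟩, ⟨hw, hz⟩, rfl⟩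
      exact (convex_convexHull ℝ s).sum_mem (fun i _ => hw.1 i) hw.2
        fun i _ => subset_convexHull ℝ s (hz i trivial)
  rw [himage]
  exact ((isCompact_stdSimplex ℝ ι).prod (isCompact_univ_pi fun _ => hs)).image (by fun_prop)

lemma subset_of_forall_exists_eq_smul_add_smul [NormedAddCommGroup E] [NormedSpace ℝ E]
    {D G : Set E} (hD : Convex ℝ D) (hD_closed : IsClosed D) (hG : Bornology.IsBounded G)
    {r : ℝ} (hr₀ : 0 ≤ r) (hr₁ : r < 1)
    (h : ∀ g ∈ G, ∃ d ∈ D, ∃ g' ∈ G, g = (1 - r) • d + r • g') : G ⊆ D := by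
  intro g₀ hg₀
  obtain ⟨d₀, hd₀, -⟩ := h g₀ hg₀
  obtain ⟨R, hR⟩ := hG.subset_closedBall d₀
  have happrox (n : ℕ) : ∀ g ∈ G, ∃ d ∈ D, dist g d ≤ r ^ n * R := by
    induction n with
    | zero => exact fun g hg => ⟨d₀, hd₀, by simpa using hR hg⟩
    | succ n ih =>
      intro g hg
      obtain ⟨d, hd, g', hg', rfl⟩ := h g hg
      obtain ⟨d', hd', hdist⟩ := ih g' hg'
      refine ⟨(1 - r) • d + r • d', hD hd hd' (by linarith) hr₀ (by ring), ?_⟩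
      rw [dist_add_left, dist_smul₀, Real.norm_of_nonneg hr₀, pow_succ', mul_assoc]
      gcongr
  choose d hd hdist using fun n => happrox n g₀ hg₀
  refine hD_closed.mem_of_tendsto (b := Filter.atTop) (f := d) ?_ (.of_forall hd)
  refine tendsto_iff_dist_tendsto_zero.2 (squeeze_zero (fun _ => dist_nonneg)
    (fun n => (dist_comm _ _).trans_le (hdist n)) ?_)
  simpa using (tendsto_pow_atTop_nhds_zero_of_lt_one hr₀ hr₁).mul_const R

end Convexity

section GramCone

open scoped ComplexOrder

universe u v

variable {S : Type u} {T : Type v}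

/-- The multipliers `(s, t) ↦ ε s * η t` with `|ε s| ≤ 1` and `|η t| ≤ 1`. -/
def simpleMultipliers (S T : Type*) : Set (S × T → ℂ) :=
  {φ | ∃ (ε : S → ℂ) (η : T → ℂ), (∀ s, ‖ε s‖ ≤ 1) ∧ (∀ t, ‖η t‖ ≤ 1) ∧
    φ = fun p => ε p.1 * η p.2}

lemma isCompact_simpleMultipliers : IsCompact (simpleMultipliers S T) := by
  have himage : simpleMultipliers S T =
      (fun (q : (S → ℂ) × (T → ℂ)) (p : S × T) => q.1 p.1 * q.2 p.2) ''
        ((Set.univ.pi fun _ => Metric.closedBall 0 1) ×ˢ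
          Set.univ.pi fun _ => Metric.closedBall 0 1) := by
    ext φ
    simp [simpleMultipliers, eq_comm, and_assoc]
  rw [himage]
  exact ((isCompact_univ_pi fun _ => isCompact_closedBall 0 1).prod
    (isCompact_univ_pi fun _ => isCompact_closedBall 0 1)).image (by fun_prop)

/-- The cone of pairs `(w, φ)` for which `φ (s, t) = ⟪y t, x s⟫` for some Hilbert space vectors with
`‖x s‖ ^ 2 ≤ w (inl s)` and `‖y t‖ ^ 2 ≤ w (inr t)`, encoded by the Gram matrix of the vectors. -/
def gramCone (S T : Type*) : PointedCone ℝ ((S ⊕ T → ℝ) × (S × T → ℂ)) where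
  carrier := {q | ∃ P : Matrix (S ⊕ T) (S ⊕ T) ℂ, P.PosSemidef ∧ (∀ i, (P i i).re ≤ q.1 i) ∧
    ∀ s t, q.2 (s, t) = P (.inr t) (.inl s)}
  zero_mem' := ⟨0, .zero, by simp, by simp⟩
  add_mem' := by
    rintro _ _ ⟨P, hP, hdiag, hblock⟩ ⟨Q, hQ, hdiag', hblock'⟩
    exact ⟨P + Q, hP.add hQ, fun i => add_le_add (hdiag i) (hdiag' i),
      fun s t => congrArg₂ (· + ·) (hblock s t) (hblock' s t)⟩
  smul_mem' := by
    rintro ⟨c, hc⟩ _ ⟨P, hP, hdiag, hblock⟩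
    refine ⟨c • P, hP.smul hc, fun i => ?_, fun s t => ?_⟩
    · simpa [Nonneg.mk_smul] using mul_le_mul_of_nonneg_left (hdiag i) hc
    · simp [hblock, Nonneg.mk_smul]

lemma gramCone_mono {w w' : S ⊕ T → ℝ} {φ : S × T → ℂ} (h : (w, φ) ∈ gramCone S T)
    (hw : w ≤ w') : (w', φ) ∈ gramCone S T := by
  obtain ⟨P, hP, hdiag, hblock⟩ := h
  exact ⟨P, hP, fun i => (hdiag i).trans (hw i), hblock⟩

lemma rankOne_mem_gramCone [Finite S] [Finite T] (z : S ⊕ T → ℂ) :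
    ((fun i => ‖z i‖ ^ 2, fun p => inner ℂ (z (.inr p.2)) (z (.inl p.1))) :
      (S ⊕ T → ℝ) × (S × T → ℂ)) ∈ gramCone S T := by
  refine ⟨Matrix.vecMulVec (star z) z, Matrix.posSemidef_vecMulVec_star_self z, fun i => ?_,
    fun s t => ?_⟩
  · rw [Matrix.vecMulVec_apply, Pi.star_apply, RCLike.star_def, Complex.conj_mul',
      ← Complex.ofReal_pow, Complex.ofReal_re]
  · simp [Matrix.vecMulVec_apply, mul_comm]

/-- The multipliers `φ (s, t) = ⟪y t, x s⟫` with `‖x s‖ ≤ 1` and `‖y t‖ ≤ 1`. -/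
def gramBall (S T : Type*) : Set (S × T → ℂ) :=
  {φ | ((1, φ) : (S ⊕ T → ℝ) × (S × T → ℂ)) ∈ gramCone S T}

lemma inv_smul_mem_gramBall {q : (S ⊕ T → ℝ) × (S × T → ℂ)} (hq : q ∈ gramCone S T) {m : ℝ}
    (hm : 0 < m) (hqm : ∀ i, q.1 i ≤ m) : m⁻¹ • q.2 ∈ gramBall S T :=
  gramCone_mono ((gramCone S T).smul_mem (inv_nonneg.2 hm.le) hq) fun i => by
    simpa [inv_mul_le_one₀ hm] using hqm i

lemma convex_gramBall : Convex ℝ (gramBall S T) := by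
  intro φ hφ φ' hφ' a b ha hb hab
  have h := (gramCone S T).convex hφ hφ' ha hb hab
  simpa [gramBall, ← add_smul, hab] using h

lemma expect_inner_mem_gramBall [Finite S] [Finite T] {Ω : Type*} [Fintype Ω] [Nonempty Ω]
    {X : Ω → S → ℂ} {Y : Ω → T → ℂ} (hX : ∀ s, 𝔼 ω, ‖X ω s‖ ^ 2 ≤ 1)
    (hY : ∀ t, 𝔼 ω, ‖Y ω t‖ ^ 2 ≤ 1) :
    (fun p => 𝔼 ω, inner ℂ (Y ω p.2) (X ω p.1)) ∈ gramBall S T := by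
  have hexpect := expect_mem_of_convex (gramCone S T).convex fun ω =>
    rankOne_mem_gramCone (Sum.elim (X ω) (Y ω))
  rw [expect_prodMk] at hexpect
  refine gramCone_mono (w := fun i => 𝔼 ω, ‖Sum.elim (X ω) (Y ω) i‖ ^ 2) ?_ (Sum.rec hX hY)
  convert SetLike.mem_coe.1 hexpect
  · rw [Finset.expect_apply]
  · rw [Finset.expect_apply]
    rfl

open scoped MatrixOrder in
lemma exists_expect_inner_eq_of_mem_gramBall [Finite S] [Finite T] {φ : S × T → ℂ}
    (hφ : φ ∈ gramBall S T) :
    ∃ (Ω : Type (max u v)) (_ : Fintype Ω) (_ : Nonempty Ω) (Z : Ω → S ⊕ T → ℂ),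
      (∀ i, 𝔼 ω, ‖Z ω i‖ ^ 2 ≤ 1) ∧ (∀ i, 𝔼 ω, ‖Z ω i‖ ^ 4 ≤ 3) ∧
        φ = fun p => 𝔼 ω, inner ℂ (Z ω (.inr p.2)) (Z ω (.inl p.1)) := by
  classical
  have := Fintype.ofFinite S
  have := Fintype.ofFinite T
  obtain ⟨P, hP, hdiag, hblock⟩ := hφ
  obtain ⟨B, rfl⟩ := CStarAlgebra.nonneg_iff_eq_star_mul_self.1 hP.nonneg
  have hB (i j) : (star B * B) i j = ∑ k, inner ℂ (B k i) (B k j) := by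
    simp [Matrix.mul_apply, mul_comm]
  have hcol (i) : ∑ k, ‖B k i‖ ^ 2 ≤ 1 := by
    simpa [hB, Complex.mul_conj', ← Complex.ofReal_pow] using hdiag i
  refine ⟨S ⊕ T → ℤˣ, inferInstance, inferInstance, fun σ i => ∑ k, ((σ k : ℤ) : ℝ) • B k i,
    fun i => ?_, fun i => ?_, ?_⟩
  · exact (expect_norm_sum_signs_sq _ _).trans_le (hcol i)
  · have hsum_nonneg : 0 ≤ ∑ k, ‖B k i‖ ^ 2 := by positivity
    refine (expect_norm_sum_signs_pow_four_le _ _).trans ?_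
    nlinarith [hcol i]
  · ext ⟨s, t⟩
    exact (hblock s t).trans ((hB _ _).trans (expect_inner_sum_signs ..).symm)

lemma expect_inner_mem_convexHull_simpleMultipliers {Ω : Type*} [Fintype Ω] [Nonempty Ω]
    {X : Ω → S → ℂ} {Y : Ω → T → ℂ} (hX : ∀ ω s, ‖X ω s‖ ≤ 1) (hY : ∀ ω t, ‖Y ω t‖ ≤ 1) :
    (fun p => 𝔼 ω, inner ℂ (Y ω p.2) (X ω p.1)) ∈ convexHull ℝ (simpleMultipliers S T) := by
  convert expect_mem_of_convex (convex_convexHull ℝ (simpleMultipliers S T)) fun ω =>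
    subset_convexHull ℝ _ ⟨X ω, fun t => conj (Y ω t), hX ω, fun t => by simpa using hY ω t, rfl⟩
  rw [Finset.expect_apply]
  simp

lemma norm_apply_le_one_of_mem_gramBall [Finite S] [Finite T] {φ : S × T → ℂ}
    (hφ : φ ∈ gramBall S T) (p : S × T) : ‖φ p‖ ≤ 1 := by
  obtain ⟨Ω, _, _, Z, hZ, -, rfl⟩ := exists_expect_inner_eq_of_mem_gramBall hφ
  calc ‖𝔼 ω, inner ℂ (Z ω (.inr p.2)) (Z ω (.inl p.1))‖
      ≤ 𝔼 ω, ‖(inner ℂ (Z ω (.inr p.2)) (Z ω (.inl p.1)) : ℂ)‖ :=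
        RCLike.norm_expect_le (K := ℂ)
    _ ≤ 𝔼 ω, (‖Z ω (.inr p.2)‖ ^ 2 + ‖Z ω (.inl p.1)‖ ^ 2) / 2 :=
        Finset.expect_le_expect fun ω _ => (norm_inner_le_norm _ _).trans <| by
          linarith [two_mul_le_add_sq ‖Z ω (.inr p.2)‖ ‖Z ω (.inl p.1)‖]
    _ ≤ 1 := by
        rw [← Finset.expect_div, Finset.expect_add_distrib]
        linarith [hZ (.inl p.1), hZ (.inr p.2)]

lemma exists_eq_smul_add_smul_of_mem_gramBall [Finite S] [Finite T] {φ : S × T → ℂ}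
    (hφ : φ ∈ gramBall S T) :
    ∃ d ∈ convexHull ℝ (simpleMultipliers S T), ∃ g ∈ gramBall S T,
      φ = (64 : ℝ) • d + (1 / 2 : ℝ) • g := by
  obtain ⟨Ω, _, _, Z, hZ_sq, hZ_four, rfl⟩ := exists_expect_inner_eq_of_mem_gramBall hφ
  -- The level `8` makes the tails have mean square at most `3 / 8 ^ 2 ≤ 1 / 4 ^ 2`.
  let low : Ω → S ⊕ T → ℂ := fun ω i => truncate 8 (Z ω i)
  let tail : Ω → S ⊕ T → ℂ := fun ω i => Z ω i - low ω i
  have hlow_le (ω i) : ‖(1 / 8 : ℝ) • low ω i‖ ≤ 1 := by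
    have h := norm_truncate_le (by norm_num : (0 : ℝ) ≤ 8) (Z ω i)
    rw [norm_smul, Real.norm_of_nonneg (by norm_num)]
    linarith
  have hlow_sq (i) : 𝔼 ω, ‖low ω i‖ ^ 2 ≤ 1 :=
    (expect_norm_truncate_sq_le fun ω => Z ω i).trans (hZ_sq i)
  have htail_sq (i) : 𝔼 ω, ‖(4 : ℝ) • tail ω i‖ ^ 2 ≤ 1 := by
    have h : 8 ^ 2 * 𝔼 ω, ‖tail ω i‖ ^ 2 ≤ 3 :=
      (sq_mul_expect_norm_sub_truncate_sq_le (by norm_num) fun ω => Z ω i).trans (hZ_four i)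
    simp only [norm_smul, mul_pow, ← Finset.mul_expect]
    norm_num
    linarith
  have hd := expect_inner_mem_convexHull_simpleMultipliers
    (X := fun ω s => (1 / 8 : ℝ) • low ω (.inl s)) (Y := fun ω t => (1 / 8 : ℝ) • low ω (.inr t))
    (fun ω _ => hlow_le ω _) fun ω _ => hlow_le ω _
  have hg₁ := expect_inner_mem_gramBall (X := fun ω s => low ω (.inl s))
    (Y := fun ω t => (4 : ℝ) • tail ω (.inr t)) (fun _ => hlow_sq _) fun _ => htail_sq _
  have hg₂ := expect_inner_mem_gramBall (X := fun ω s => (4 : ℝ) • tail ω (.inl s))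
    (Y := fun ω t => Z ω (.inr t)) (fun _ => htail_sq _) fun _ => hZ_sq _
  refine ⟨_, hd, _, convex_gramBall hg₁ hg₂ (a := 1 / 2) (b := 1 / 2) (by norm_num)
    (by norm_num) (by norm_num), ?_⟩
  have hsplit (ω i j) : inner ℂ (Z ω j) (Z ω i) =
      (64 : ℝ) • inner ℂ ((1 / 8 : ℝ) • low ω j) ((1 / 8 : ℝ) • low ω i) +
        (1 / 2 : ℝ) • ((1 / 2 : ℝ) • inner ℂ ((4 : ℝ) • tail ω j) (low ω i) +
          (1 / 2 : ℝ) • inner ℂ (Z ω j) ((4 : ℝ) • tail ω i)) := by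
    simp only [inner_smul_left_eq_smul, inner_smul_right_eq_smul, smul_smul, smul_add, tail,
      inner_sub_left, inner_sub_right]
    module
  ext p
  simp only [hsplit, Finset.expect_add_distrib, Finset.smul_expect, smul_add, Pi.add_apply,
    Pi.smul_apply]

open scoped Pointwise

lemma isCompact_smul_convexHull_simpleMultipliers [Finite S] [Finite T] (c : ℝ) :
    IsCompact (c • convexHull ℝ (simpleMultipliers S T)) :=
  (isCompact_convexHull isCompact_simpleMultipliers).smul c

/-- **Grothendieck's inequality**, in its dual form. -/
theorem gramBall_subset_smul_convexHull [Finite S] [Finite T] :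
    gramBall S T ⊆ (128 : ℝ) • convexHull ℝ (simpleMultipliers S T) := by
  have := Fintype.ofFinite (S × T)
  refine subset_of_forall_exists_eq_smul_add_smul ((convex_convexHull ℝ _).smul 128)
    (isCompact_smul_convexHull_simpleMultipliers 128).isClosed ?_ (r := 1 / 2) (by norm_num)
    (by norm_num) fun φ hφ => ?_
  · refine isBounded_iff_forall_norm_le.2 ⟨1, fun φ hφ => ?_⟩
    exact (pi_norm_le_iff_of_nonneg zero_le_one).2 (norm_apply_le_one_of_mem_gramBall hφ)
  · obtain ⟨d, hd, g, hg, rfl⟩ := exists_eq_smul_add_smul_of_mem_gramBall hφ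
    refine ⟨_, Set.smul_mem_smul_set hd, g, hg, ?_⟩
    rw [smul_smul]
    norm_num

end GramCone

section SchurMultiplier

open scoped Matrix Matrix.Norms.L2Operator

variable {S T : Type*}

section Matrix

variable [Fintype S] [Fintype T]

section OperatorNorm

variable [DecidableEq S]

lemma l2_opNorm_le_two_mul_iff {A : Matrix T S ℂ} {c : ℝ} (hc : 0 ≤ c) :
    ‖A‖ ≤ 2 * c ↔ ∀ z : S ⊕ T → ℂ,
      (∑ p : S × T, A p.2 p.1 * inner ℂ (z (.inr p.2)) (z (.inl p.1))).re ≤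
        c * ∑ i, ‖z i‖ ^ 2 := by
  let f : EuclideanSpace ℂ S →L[ℂ] EuclideanSpace ℂ T :=
    (Matrix.toEuclideanLin.trans LinearMap.toContinuousLinearMap) A
  have hform (x : EuclideanSpace ℂ S) (y : EuclideanSpace ℂ T) :
      inner ℂ y (f x) = ∑ p : S × T, A p.2 p.1 * inner ℂ (y p.2) (x p.1) := by
    simp only [f, PiLp.inner_apply, Fintype.sum_prod_type_right]
    simp [Matrix.mulVec, dotProduct, Finset.sum_mul, mul_assoc]
  rw [Matrix.l2_opNorm_def]
  refine ⟨fun hA z => ?_, fun h => opNorm_le_of_re_inner_le (by positivity) fun x y hx hy => ?_⟩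
  · set x : EuclideanSpace ℂ S := WithLp.toLp 2 fun s => z (.inl s)
    set y : EuclideanSpace ℂ T := WithLp.toLp 2 fun t => z (.inr t)
    calc _ = (inner ℂ y (f x)).re := by rw [hform]
      _ ≤ ‖y‖ * ‖f x‖ := re_inner_le_norm (𝕜 := ℂ) _ _
      _ ≤ ‖y‖ * (2 * c * ‖x‖) := by gcongr; exact f.le_of_opNorm_le hA x
      _ ≤ c * (‖x‖ ^ 2 + ‖y‖ ^ 2) := by nlinarith [mul_nonneg hc (sq_nonneg (‖x‖ - ‖y‖))]
      _ = _ := by simp [x, y, EuclideanSpace.norm_sq_eq]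
  · calc _ = (inner ℂ y (f x)).re := inner_re_symm (𝕜 := ℂ) _ _
      _ ≤ c * (‖x‖ ^ 2 + ‖y‖ ^ 2) := by
        rw [hform]
        simpa [EuclideanSpace.norm_sq_eq] using h (Sum.elim x y)
      _ = 2 * c := by rw [hx, hy]; ring

/-- The operator `ℓ²(S) → ℓ²(T)` with matrix `A`, for finite `S` and `T`. -/
def matrixToLp : Matrix T S ℂ ≃
    (lp (fun _ : S => ℂ) 2 →L[ℂ] lp (fun _ : T => ℂ) 2) :=
  ((Matrix.toEuclideanLin.trans LinearMap.toContinuousLinearMap).toEquiv).trans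
    ((lpPiLpₗᵢ (fun _ : S => ℂ) ℂ).symm.toContinuousLinearEquiv.arrowCongrEquiv
      (lpPiLpₗᵢ (fun _ : T => ℂ) ℂ).symm.toContinuousLinearEquiv)

lemma norm_matrixToLp (A : Matrix T S ℂ) : ‖matrixToLp A‖ = ‖A‖ := by
  rw [matrixToLp, Equiv.trans_apply, ContinuousLinearEquiv.arrowCongrEquiv_apply,
    ← LinearIsometryEquiv.toContinuousLinearEquiv_symm, LinearIsometryEquiv.symm_symm,
    opNorm_linearIsometryEquiv_comp, opNorm_comp_linearIsometryEquiv]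
  rfl

lemma inner_single_matrixToLp_single [DecidableEq T] (A : Matrix T S ℂ) (s : S) (t : T) :
    inner ℂ (lp.single 2 t 1) (matrixToLp A (lp.single 2 s 1)) = A t s := by
  have hsingle : lpPiLpₗᵢ (fun _ : S => ℂ) ℂ (lp.single 2 s 1) = WithLp.toLp 2 (Pi.single s 1) :=
    PiLp.ext fun i => (congrFun (coe_lpPiLpₗᵢ _) i).trans (lp.single_apply ..)
  calc _ = (lpPiLpₗᵢ (fun _ : T => ℂ) ℂ).symm
        (A.toEuclideanLin (lpPiLpₗᵢ (fun _ : S => ℂ) ℂ (lp.single 2 s 1))) t := by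
        rw [lp.inner_single_left]
        simp [matrixToLp]
    _ = A.toEuclideanLin (WithLp.toLp 2 (Pi.single s 1)) t := by
        rw [hsingle, coe_lpPiLpₗᵢ_symm]
    _ = A t s := by simp

lemma IsSchurMultiplier.norm_hadamard_le {ψ : S × T → ℂ} {C : ℝ} (hψ : IsSchurMultiplier ψ C)
    (A : Matrix T S ℂ) : ‖Matrix.of (fun t s => ψ (s, t)) ⊙ A‖ ≤ C * ‖A‖ := by
  classical
  obtain ⟨B, hB, hB_norm⟩ := hψ (matrixToLp A)
  obtain ⟨B, rfl⟩ := matrixToLp.surjective B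
  have hBA : B = Matrix.of (fun t s => ψ (s, t)) ⊙ A := by
    ext t s
    rw [Matrix.hadamard_apply, Matrix.of_apply, ← inner_single_matrixToLp_single A,
      ← inner_single_matrixToLp_single B]
    convert hB s t
  rwa [norm_matrixToLp, norm_matrixToLp, hBA] at hB_norm

end OperatorNorm

lemma IsSchurMultiplier.re_sum_mul_le_of_pos {ψ : S × T → ℂ} {C : ℝ} (hC : 0 ≤ C)
    (hψ : IsSchurMultiplier ψ C) {A : Matrix T S ℂ} {w : S ⊕ T → ℝ} (hw : ∀ i, 0 < w i)
    (hA : ∀ z : S ⊕ T → ℂ,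
      (∑ p : S × T, A p.2 p.1 * inner ℂ (z (.inr p.2)) (z (.inl p.1))).re ≤
        ∑ i, w i * ‖z i‖ ^ 2) :
    (∑ p : S × T, A p.2 p.1 * ψ p).re ≤ C * ∑ i, w i := by
  classical
  let r : S ⊕ T → ℝ := fun i => √(w i)
  have hr (i) : (r i : ℂ) ≠ 0 := Complex.ofReal_ne_zero.2 (Real.sqrt_pos.2 (hw i)).ne'
  have hr_sq (i) : r i ^ 2 = w i := Real.sq_sqrt (hw i).le
  let A' : Matrix T S ℂ := Matrix.of fun t s => A t s / (r (.inr t) * r (.inl s))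
  have hA' : ‖A'‖ ≤ 2 * 1 := by
    refine (l2_opNorm_le_two_mul_iff zero_le_one).2 fun z => ?_
    convert hA fun i => z i / r i using 1
    · congr! 2 with p
      simp [A', field]
    · rw [one_mul]
      refine Finset.sum_congr rfl fun i _ => ?_
      rw [norm_div, Complex.norm_real, div_pow, Real.norm_eq_abs, sq_abs, hr_sq,
        mul_div_cancel₀ _ (hw i).ne']
  have hψA' : ‖Matrix.of (fun t s => ψ (s, t)) ⊙ A'‖ ≤ 2 * C := by
    linarith [hψ.norm_hadamard_le A', mul_le_mul_of_nonneg_left hA' hC]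
  convert (l2_opNorm_le_two_mul_iff hC).1 hψA' fun i => r i using 1
  · congr! 2 with p
    have := hr (.inl p.1)
    have := hr (.inr p.2)
    simp [A']
    field_simp
  · simp [hr_sq]

lemma IsSchurMultiplier.re_sum_mul_le {ψ : S × T → ℂ} {C : ℝ} (hC : 0 ≤ C)
    (hψ : IsSchurMultiplier ψ C) {A : Matrix T S ℂ} {w : S ⊕ T → ℝ} (hw : ∀ i, 0 ≤ w i)
    (hA : ∀ z : S ⊕ T → ℂ,
      (∑ p : S × T, A p.2 p.1 * inner ℂ (z (.inr p.2)) (z (.inl p.1))).re ≤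
        ∑ i, w i * ‖z i‖ ^ 2) :
    (∑ p : S × T, A p.2 p.1 * ψ p).re ≤ C * ∑ i, w i := by
  have hpos (δ : ℝ) (hδ : 0 < δ) :
      (∑ p : S × T, A p.2 p.1 * ψ p).re ≤ C * ∑ i, (w i + δ) := by
    refine hψ.re_sum_mul_le_of_pos hC (fun i => add_pos_of_nonneg_of_pos (hw i) hδ) fun z => ?_
    refine (hA z).trans ?_
    gcongr
    linarith
  have hlim : Filter.Tendsto (fun δ => C * ∑ i, (w i + δ)) (nhdsWithin 0 (Set.Ioi 0))
      (nhds (C * ∑ i, (w i + 0))) :=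
    (Continuous.tendsto (by fun_prop) 0).mono_left nhdsWithin_le_nhds
  simpa using ge_of_tendsto hlim (eventually_mem_nhdsWithin.mono hpos)

lemma exists_apply_eq_sum_add_re_sum
    (f : Module.Dual ℝ ((S ⊕ T → ℝ) × (S × T → ℂ))) :
    ∃ (w : S ⊕ T → ℝ) (A : Matrix T S ℂ),
      ∀ q, f q = ∑ i, w i * q.1 i + (∑ p : S × T, A p.2 p.1 * q.2 p).re := by
  classical
  let g : Module.Dual ℂ (S × T → ℂ) := Module.Dual.extendRCLike (f ∘ₗ LinearMap.inr ℝ _ _)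
  refine ⟨fun i => f (fun j => if i = j then 1 else 0, 0),
    Matrix.of fun t s => g fun p => if (s, t) = p then 1 else 0, fun q => ?_⟩
  have hg : f (0, q.2) = (g q.2).re := by simp [g, Module.Dual.extendRCLike_apply]
  calc f q = f (q.1, 0) + f (0, q.2) := by rw [← map_add, Prod.fst_add_snd]
    _ = _ := by
      rw [hg, LinearMap.pi_apply_eq_sum_univ g]
      refine congrArg₂ (· + ·) ?_ (by simp [mul_comm])
      simpa [mul_comm] using (f ∘ₗ LinearMap.inl ℝ _ _).pi_apply_eq_sum_univ q.1

end Matrix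

lemma IsSchurMultiplier.mem_closure_gramCone [Finite S] [Finite T] {ψ : S × T → ℂ} {C : ℝ}
    (hC : 0 ≤ C) (hψ : IsSchurMultiplier ψ C) :
    ((fun _ => C, ψ) : (S ⊕ T → ℝ) × (S × T → ℂ)) ∈ closure (gramCone S T : Set _) := by
  classical
  have := Fintype.ofFinite S
  have := Fintype.ofFinite T
  by_contra hnotMem
  obtain ⟨f, hf, hf_neg⟩ :=
    ProperCone.hyperplane_separation_point (Submodule.closure (gramCone S T)) hnotMem
  obtain ⟨w, A, hfwA⟩ := exists_apply_eq_sum_add_re_sum f.toLinearMap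
  simp only [ContinuousLinearMap.coe_coe] at hfwA
  have hw (i) : 0 ≤ w i := by
    have hmem : ((Pi.single i 1, 0) : (S ⊕ T → ℝ) × (S × T → ℂ)) ∈ gramCone S T :=
      gramCone_mono (zero_mem _) (Pi.single_nonneg.2 zero_le_one)
    simpa [hfwA, Pi.single_apply] using hf _ (subset_closure hmem)
  have hbound := hψ.re_sum_mul_le hC (A := -A) hw fun z => by
    have hz := hf _ (subset_closure (rankOne_mem_gramCone z))
    simp only [hfwA] at hz
    simp only [Matrix.neg_apply, neg_mul, Finset.sum_neg_distrib, Complex.neg_re]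
    linarith
  rw [hfwA] at hf_neg
  simp only [Matrix.neg_apply, neg_mul, Finset.sum_neg_distrib, Complex.neg_re,
    ← Finset.sum_mul] at hbound hf_neg
  linarith

open scoped Pointwise

lemma IsSchurMultiplier.mem_smul_convexHull_simpleMultipliers [Finite S] [Finite T]
    {ψ : S × T → ℂ} {C : ℝ} (hC : 0 < C) (hψ : IsSchurMultiplier ψ C) :
    ψ ∈ (128 * C) • convexHull ℝ (simpleMultipliers S T) := by
  have := Fintype.ofFinite S
  have := Fintype.ofFinite T
  let normalize : (S ⊕ T → ℝ) × (S × T → ℂ) → (S × T → ℂ) := fun q => (max C ‖q.1‖)⁻¹ • q.2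
  have hmax_pos (w : S ⊕ T → ℝ) : 0 < max C ‖w‖ := lt_max_of_lt_left hC
  have hnormalize : Continuous normalize :=
    ((continuous_const.max continuous_fst.norm).inv₀ fun q => (hmax_pos q.1).ne').smul
      continuous_snd
  have hmaps : Set.MapsTo normalize (gramCone S T) (gramBall S T) := fun q hq =>
    inv_smul_mem_gramBall hq (hmax_pos q.1) fun i =>
      (le_abs_self _).trans ((norm_le_pi_norm q.1 i).trans (le_max_right _ _))
  have hψ_normalize : normalize (fun _ => C, ψ) = C⁻¹ • ψ := by
    have hle : ‖(fun _ => C : S ⊕ T → ℝ)‖ ≤ C :=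
      (pi_norm_le_iff_of_nonneg hC.le).2 fun _ => (Real.norm_of_nonneg hC.le).le
    simp only [normalize, max_eq_left hle]
  have hmem : C⁻¹ • ψ ∈ (128 : ℝ) • convexHull ℝ (simpleMultipliers S T) := by
    rw [← hψ_normalize, ← (isCompact_smul_convexHull_simpleMultipliers 128).isClosed.closure_eq]
    exact closure_mono gramBall_subset_smul_convexHull
      (map_mem_closure hnormalize (hψ.mem_closure_gramCone hC.le) hmaps)
  rwa [mul_comm, mul_smul, Set.mem_smul_set_iff_inv_smul_mem₀ hC.ne']

end SchurMultiplier

theorem stmt_17_general {S T : Type*} [Finite S] [Finite T] {ψ : S × T → ℂ} {C : ℝ}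
    (hC : 0 < C) (hψ : IsSchurMultiplier ψ C) :
    ∃ (lam : ℕ → ℂ) (ε : ℕ → S → ℂ) (η : ℕ → T → ℂ),
      (∀ m s, ‖ε m s‖ ≤ 1) ∧ (∀ m t, ‖η m t‖ ≤ 1) ∧
      Summable (fun m => ‖lam m‖) ∧ (∑' m, ‖lam m‖) ≤ 128 * C ∧
      ∀ s t, HasSum (fun m => lam m * ε m s * η m t) (ψ (s, t)) := by
  obtain ⟨φ, hφ, rfl⟩ := hψ.mem_smul_convexHull_simpleMultipliers hC
  obtain ⟨w, z, hw, hz, hw_sum, hz_sum⟩ := exists_hasSum_smul_of_mem_convexHull hφ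
  choose ε η hε hη hzεη using hz
  have hlam (m) : ‖((128 * C * w m : ℝ) : ℂ)‖ = 128 * C * w m := by
    rw [Complex.norm_real, Real.norm_of_nonneg (mul_nonneg (by positivity) (hw m))]
  have hlam_sum : HasSum (fun m => ‖((128 * C * w m : ℝ) : ℂ)‖) (128 * C) := by
    simpa only [hlam, mul_one] using hw_sum.mul_left (128 * C)
  refine ⟨fun m => (128 * C * w m : ℝ), ε, η, hε, hη, hlam_sum.summable, hlam_sum.tsum_eq.le,
    fun s t => ?_⟩
  convert (Pi.hasSum.1 hz_sum (s, t)).const_smul (128 * C) using 2 with m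
  · simp [hzεη, mul_assoc]
  · rfl

/-- Grothendieck's theorem for Schur multipliers: there is a constant
`K ≥ 1` such that every Schur multiplier `ψ` of norm at most 1 on finite nonempty sets
`S, T` lies in `K` times the (absolutely convergent) convex hull of simple multipliers
`(s,t) ↦ ε(s)η(t)` with `|ε| ≤ 1`, `|η| ≤ 1`. -/
theorem stmt_17 :
    ∃ K : ℝ, 1 ≤ K ∧
      ∀ (S T : Type), Finite S → Finite T → Nonempty S → Nonempty T →
        ∀ ψ : S × T → ℂ, IsSchurMultiplier ψ 1 →
          ∃ (lam : ℕ → ℂ) (ε : ℕ → S → ℂ) (η : ℕ → T → ℂ),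
            (∀ m s, ‖ε m s‖ ≤ 1) ∧ (∀ m t, ‖η m t‖ ≤ 1) ∧
            Summable (fun m => ‖lam m‖) ∧ (∑' m, ‖lam m‖) ≤ K ∧
            ∀ s t, HasSum (fun m => lam m * ε m s * η m t) (ψ (s, t)) :=
  ⟨128, by norm_num, fun S T _ _ _ _ ψ hψ => by simpa using stmt_17_general one_pos hψ⟩
end
end
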